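/- arXiv:2304.08270 — 7 statements merged into one kernel-verified Lean document; each statement's English description precedes it below -/
import Mathlib

section
/- Let q, p be natural numbers, let a, b be real constants, and let u, v, f, g : ℝ² → ℂ be smooth functions of the variables (τ, ρ). Write D = ∂_τ^q ∂_ρ^p for the iterated partial derivative operator. If on all of ℝ² the equations (1+τ)·∂_τ v − ρ·∂_ρ v − f + a·v = 0 and (1−τ)·∂_τ u + ρ·∂_ρ u − g + b·u = 0 hold, then on all of ℝ²: ∂_τ( (1+τ)·|Dv|² + (1−τ)·|Du|² ) + ∂_ρ( ρ·|Du|² − ρ·|Dv|² ) + 2(a+q−p)·|Dv|² + 2(b−q+p)·|Du|² = 2·Re( (Df)·conj(Dv) + (Dg)·conj(Du) ). -/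
/-- Partial derivative with respect to the first variable `τ`. -/
noncomputable def pd1 {E : Type*} [NormedAddCommGroup E] [NormedSpace ℝ E]
    (u : ℝ → ℝ → E) : ℝ → ℝ → E := fun τ ρ => deriv (fun t => u t ρ) τ

/-- Partial derivative with respect to the second variable `ρ`. -/
noncomputable def pd2 {E : Type*} [NormedAddCommGroup E] [NormedSpace ℝ E]
    (u : ℝ → ℝ → E) : ℝ → ℝ → E := fun τ ρ => deriv (fun r => u τ r) ρ

/-- The operator `D = ∂_τ^q ∂_ρ^p`. -/
noncomputable def Dop (q p : ℕ) (u : ℝ → ℝ → ℂ) : ℝ → ℝ → ℂ := pd1^[q] (pd2^[p] u)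

/-!
The vector field `(1 + s τ) ∂_τ - s ρ ∂_ρ` is divergence free, so pairing the transport operator
`(1 + s τ) ∂_τ - s ρ ∂_ρ + c` applied to `w` with `w` itself gives an energy identity in which only
the zeroth-order coefficient `c` contributes a bulk term. Passing a `∂_τ` through the operator
raises `c` by `s`, and passing a `∂_ρ` lowers `c` by `s`, so `D` replaces `c` by `c + (q - p) s`.
The claim is the sum of the energy identities of `D v` with `s = 1` and of `D u` with `s = -1`.
-/

open Function
open scoped InnerProductSpace

section PartialDerivatives

variable {E : Type*} [NormedAddCommGroup E] [NormedSpace ℝ E] {u : ℝ → ℝ → E} {τ ρ : ℝ}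

theorem hasDerivAt_fst_fderiv (hu : DifferentiableAt ℝ (uncurry u) (τ, ρ)) :
    HasDerivAt (fun t => u t ρ) (fderiv ℝ (uncurry u) (τ, ρ) (1, 0)) τ :=
  hu.hasFDerivAt.comp_hasDerivAt (f := fun t : ℝ => (t, ρ)) τ
    ((hasDerivAt_id τ).prodMk (hasDerivAt_const τ ρ))

theorem hasDerivAt_snd_fderiv (hu : DifferentiableAt ℝ (uncurry u) (τ, ρ)) :
    HasDerivAt (fun r => u τ r) (fderiv ℝ (uncurry u) (τ, ρ) (0, 1)) ρ :=
  hu.hasFDerivAt.comp_hasDerivAt (f := fun r : ℝ => (τ, r)) ρ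
    ((hasDerivAt_const ρ τ).prodMk (hasDerivAt_id ρ))

theorem pd1_eq_fderiv (hu : DifferentiableAt ℝ (uncurry u) (τ, ρ)) :
    pd1 u τ ρ = fderiv ℝ (uncurry u) (τ, ρ) (1, 0) :=
  (hasDerivAt_fst_fderiv hu).deriv

theorem pd2_eq_fderiv (hu : DifferentiableAt ℝ (uncurry u) (τ, ρ)) :
    pd2 u τ ρ = fderiv ℝ (uncurry u) (τ, ρ) (0, 1) :=
  (hasDerivAt_snd_fderiv hu).deriv

theorem hasDerivAt_pd1 (hu : DifferentiableAt ℝ (uncurry u) (τ, ρ)) :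
    HasDerivAt (fun t => u t ρ) (pd1 u τ ρ) τ :=
  (hasDerivAt_fst_fderiv hu).differentiableAt.hasDerivAt

theorem hasDerivAt_pd2 (hu : DifferentiableAt ℝ (uncurry u) (τ, ρ)) :
    HasDerivAt (fun r => u τ r) (pd2 u τ ρ) ρ :=
  (hasDerivAt_snd_fderiv hu).differentiableAt.hasDerivAt

theorem uncurry_pd1 (hu : Differentiable ℝ (uncurry u)) :
    uncurry (pd1 u) = fun z => fderiv ℝ (uncurry u) z (1, 0) :=
  funext fun z => pd1_eq_fderiv (hu z)

theorem uncurry_pd2 (hu : Differentiable ℝ (uncurry u)) :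
    uncurry (pd2 u) = fun z => fderiv ℝ (uncurry u) z (0, 1) :=
  funext fun z => pd2_eq_fderiv (hu z)

theorem contDiff_pd1 {n : WithTop ℕ∞} (hu : ContDiff ℝ (n + 1) (uncurry u)) :
    ContDiff ℝ n (uncurry (pd1 u)) := by
  rw [uncurry_pd1 (hu.differentiable (by simp))]
  exact (hu.fderiv_right le_rfl).clm_apply contDiff_const

theorem contDiff_pd2 {n : WithTop ℕ∞} (hu : ContDiff ℝ (n + 1) (uncurry u)) :
    ContDiff ℝ n (uncurry (pd2 u)) := by
  rw [uncurry_pd2 (hu.differentiable (by simp))]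
  exact (hu.fderiv_right le_rfl).clm_apply contDiff_const

theorem pd1_add {v : ℝ → ℝ → E} (hu : DifferentiableAt ℝ (fun t => u t ρ) τ)
    (hv : DifferentiableAt ℝ (fun t => v t ρ) τ) : pd1 (u + v) τ ρ = pd1 u τ ρ + pd1 v τ ρ :=
  deriv_add hu hv

theorem pd2_add {v : ℝ → ℝ → E} (hu : DifferentiableAt ℝ (fun r => u τ r) ρ)
    (hv : DifferentiableAt ℝ (fun r => v τ r) ρ) : pd2 (u + v) τ ρ = pd2 u τ ρ + pd2 v τ ρ :=
  deriv_add hu hv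

theorem contDiff_iterate_pd1 {n : WithTop ℕ∞} {k : ℕ}
    (hu : ContDiff ℝ (n + k) (uncurry u)) : ContDiff ℝ n (uncurry (pd1^[k] u)) := by
  induction k generalizing n with
  | zero => simpa using hu
  | succ k ih =>
    rw [iterate_succ_apply']
    refine contDiff_pd1 (ih ?_)
    rwa [add_right_comm, add_assoc, ← Nat.cast_succ]

theorem contDiff_iterate_pd2 {n : WithTop ℕ∞} {k : ℕ}
    (hu : ContDiff ℝ (n + k) (uncurry u)) : ContDiff ℝ n (uncurry (pd2^[k] u)) := by
  induction k generalizing n with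
  | zero => simpa using hu
  | succ k ih =>
    rw [iterate_succ_apply']
    refine contDiff_pd2 (ih ?_)
    rwa [add_right_comm, add_assoc, ← Nat.cast_succ]

theorem differentiable_iterate_pd1_iterate_pd2 {q p : ℕ}
    (hu : ContDiff ℝ (q + p + 1 : ℕ) (uncurry u)) :
    Differentiable ℝ (uncurry (pd1^[q] (pd2^[p] u))) := by
  have hp : ContDiff ℝ (1 + q) (uncurry (pd2^[p] u)) :=
    contDiff_iterate_pd2 (hu.of_le (by norm_cast; omega))
  exact (contDiff_iterate_pd1 hp).differentiable one_ne_zero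

theorem pd1_pd2_comm (hu : ContDiff ℝ 2 (uncurry u)) : pd1 (pd2 u) = pd2 (pd1 u) := by
  have hu₁ : Differentiable ℝ (uncurry u) := hu.differentiable two_ne_zero
  have hu₂ : Differentiable ℝ (fderiv ℝ (uncurry u)) :=
    (hu.fderiv_right (m := 1) (by norm_num)).differentiable one_ne_zero
  have fderiv_fderiv_apply (e z : ℝ × ℝ) :
      fderiv ℝ (fun z => fderiv ℝ (uncurry u) z e) z
        = (fderiv ℝ (fderiv ℝ (uncurry u)) z).flip e := by
    simp [fderiv_clm_apply (hu₂ z) (differentiableAt_const e)]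
  funext τ ρ
  have h₁₂ : pd1 (pd2 u) τ ρ = fderiv ℝ (fderiv ℝ (uncurry u)) (τ, ρ) (1, 0) (0, 1) := by
    rw [pd1_eq_fderiv ((contDiff_pd2 (n := 1) hu).differentiable one_ne_zero _),
      uncurry_pd2 hu₁, fderiv_fderiv_apply, ContinuousLinearMap.flip_apply]
  have h₂₁ : pd2 (pd1 u) τ ρ = fderiv ℝ (fderiv ℝ (uncurry u)) (τ, ρ) (0, 1) (1, 0) := by
    rw [pd2_eq_fderiv ((contDiff_pd1 (n := 1) hu).differentiable one_ne_zero _),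
      uncurry_pd1 hu₁, fderiv_fderiv_apply, ContinuousLinearMap.flip_apply]
  have symm : IsSymmSndFDerivAt ℝ (uncurry u) (τ, ρ) :=
    hu.contDiffAt.isSymmSndFDerivAt (by simp)
  rw [h₁₂, h₂₁, symm.eq]

end PartialDerivatives

section Transport

variable {E : Type*} [NormedAddCommGroup E] [NormedSpace ℝ E] {w : ℝ → ℝ → E}

/-- The transport operator `(1 + s τ) ∂_τ - s ρ ∂_ρ + c` of the outgoing (`s = 1`) and incoming
(`s = -1`) equations. -/
noncomputable def transport (s c : ℝ) (w : ℝ → ℝ → E) : ℝ → ℝ → E := fun τ ρ =>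
  (1 + s * τ) • pd1 w τ ρ - (s * ρ) • pd2 w τ ρ + c • w τ ρ

theorem pd1_transport (s c : ℝ) (hw : ContDiff ℝ 2 (uncurry w)) :
    pd1 (transport s c w) = transport s (c + s) (pd1 w) := by
  funext τ ρ
  have hw₀ := hasDerivAt_pd1 (hw.differentiable two_ne_zero (τ, ρ))
  have hw₁ := hasDerivAt_pd1 ((contDiff_pd1 (n := 1) hw).differentiable one_ne_zero (τ, ρ))
  have hw₂ := hasDerivAt_pd1 ((contDiff_pd2 (n := 1) hw).differentiable one_ne_zero (τ, ρ))
  have hcoeff : HasDerivAt (fun t => 1 + s * t) s τ := by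
    simpa using ((hasDerivAt_id τ).const_mul s).const_add 1
  calc pd1 (transport s c w) τ ρ
      = (1 + s * τ) • pd1 (pd1 w) τ ρ + s • pd1 w τ ρ - (s * ρ) • pd1 (pd2 w) τ ρ
          + c • pd1 w τ ρ :=
        (((hcoeff.smul hw₁).sub (hw₂.const_smul (s * ρ))).add (hw₀.const_smul c)).deriv
    _ = transport s (c + s) (pd1 w) τ ρ := by
        rw [pd1_pd2_comm hw, transport]
        module

theorem pd2_transport (s c : ℝ) (hw : ContDiff ℝ 2 (uncurry w)) :
    pd2 (transport s c w) = transport s (c - s) (pd2 w) := by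
  funext τ ρ
  have hw₀ := hasDerivAt_pd2 (hw.differentiable two_ne_zero (τ, ρ))
  have hw₁ := hasDerivAt_pd2 ((contDiff_pd1 (n := 1) hw).differentiable one_ne_zero (τ, ρ))
  have hw₂ := hasDerivAt_pd2 ((contDiff_pd2 (n := 1) hw).differentiable one_ne_zero (τ, ρ))
  have hcoeff : HasDerivAt (fun r => s * r) s ρ := by
    simpa using (hasDerivAt_id ρ).const_mul s
  calc pd2 (transport s c w) τ ρ
      = (1 + s * τ) • pd2 (pd1 w) τ ρ - ((s * ρ) • pd2 (pd2 w) τ ρ + s • pd2 w τ ρ)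
          + c • pd2 w τ ρ :=
        (((hw₁.const_smul (1 + s * τ)).sub (hcoeff.smul hw₂)).add (hw₀.const_smul c)).deriv
    _ = transport s (c - s) (pd2 w) τ ρ := by
        rw [← pd1_pd2_comm hw, transport]
        module

theorem iterate_pd1_transport (s c : ℝ) {q : ℕ} (hw : ContDiff ℝ (q + 1 : ℕ) (uncurry w)) :
    pd1^[q] (transport s c w) = transport s (c + q * s) (pd1^[q] w) := by
  induction q with
  | zero => simp
  | succ q ih =>
    have hq : ContDiff ℝ 2 (uncurry (pd1^[q] w)) :=
      contDiff_iterate_pd1 (n := 2) (hw.of_le (by norm_cast; omega))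
    rw [iterate_succ_apply', ih (hw.of_le (by norm_cast; omega)), pd1_transport _ _ hq,
      ← iterate_succ_apply' pd1]
    congr 1
    push_cast
    ring

theorem iterate_pd2_transport (s c : ℝ) {p : ℕ} (hw : ContDiff ℝ (p + 1 : ℕ) (uncurry w)) :
    pd2^[p] (transport s c w) = transport s (c - p * s) (pd2^[p] w) := by
  induction p with
  | zero => simp
  | succ p ih =>
    have hp : ContDiff ℝ 2 (uncurry (pd2^[p] w)) :=
      contDiff_iterate_pd2 (n := 2) (hw.of_le (by norm_cast; omega))
    rw [iterate_succ_apply', ih (hw.of_le (by norm_cast; omega)), pd2_transport _ _ hp,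
      ← iterate_succ_apply' pd2]
    congr 1
    push_cast
    ring

theorem iterate_pd1_iterate_pd2_transport (s c : ℝ) {q p : ℕ}
    (hw : ContDiff ℝ (q + p + 1 : ℕ) (uncurry w)) :
    pd1^[q] (pd2^[p] (transport s c w))
      = transport s (c + (q - p) * s) (pd1^[q] (pd2^[p] w)) := by
  have hp : ContDiff ℝ (q + 1 : ℕ) (uncurry (pd2^[p] w)) :=
    contDiff_iterate_pd2 (hw.of_le (by norm_cast; omega))
  rw [iterate_pd2_transport s c (hw.of_le (by norm_cast; omega)), iterate_pd1_transport _ _ hp]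
  congr 1
  ring

end Transport

section Energy

variable {E F : Type*} [NormedAddCommGroup E] [InnerProductSpace ℝ E]
  [NormedAddCommGroup F] [InnerProductSpace ℝ F]

/-- The energy density `(1 + s τ) |w|²` carried by a field transported with speed `s`. -/
noncomputable def energyDensity (s : ℝ) (w : ℝ → ℝ → E) : ℝ → ℝ → ℝ := fun τ ρ =>
  (1 + s * τ) * ‖w τ ρ‖ ^ 2

/-- The flux `-s ρ |w|²` in the `ρ` direction of a field transported with speed `s`. -/
noncomputable def energyFlux (s : ℝ) (w : ℝ → ℝ → E) : ℝ → ℝ → ℝ := fun τ ρ =>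
  -(s * ρ) * ‖w τ ρ‖ ^ 2

variable {w : ℝ → ℝ → E} {τ ρ : ℝ}

theorem hasDerivAt_energyDensity (s : ℝ) (hw : DifferentiableAt ℝ (uncurry w) (τ, ρ)) :
    HasDerivAt (fun t => energyDensity s w t ρ)
      (s * ‖w τ ρ‖ ^ 2 + (1 + s * τ) * (2 * ⟪w τ ρ, pd1 w τ ρ⟫_ℝ)) τ := by
  have hcoeff : HasDerivAt (fun t => 1 + s * t) s τ := by
    simpa using ((hasDerivAt_id τ).const_mul s).const_add 1
  exact hcoeff.mul (hasDerivAt_pd1 hw).norm_sq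

theorem hasDerivAt_energyFlux (s : ℝ) (hw : DifferentiableAt ℝ (uncurry w) (τ, ρ)) :
    HasDerivAt (fun r => energyFlux s w τ r)
      (-s * ‖w τ ρ‖ ^ 2 + -(s * ρ) * (2 * ⟪w τ ρ, pd2 w τ ρ⟫_ℝ)) ρ := by
  have hcoeff : HasDerivAt (fun r => -(s * r)) (-s) ρ := by
    simpa using ((hasDerivAt_id ρ).const_mul s).fun_neg
  exact hcoeff.mul (hasDerivAt_pd2 hw).norm_sq

theorem transport_energy_identity (s c : ℝ) (hw : DifferentiableAt ℝ (uncurry w) (τ, ρ)) :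
    pd1 (energyDensity s w) τ ρ + pd2 (energyFlux s w) τ ρ + 2 * c * ‖w τ ρ‖ ^ 2
      = 2 * ⟪w τ ρ, transport s c w τ ρ⟫_ℝ := by
  have hτ : pd1 (energyDensity s w) τ ρ = _ := (hasDerivAt_energyDensity s hw).deriv
  have hρ : pd2 (energyFlux s w) τ ρ = _ := (hasDerivAt_energyFlux s hw).deriv
  simp only [hτ, hρ, transport, inner_add_right, inner_sub_right, real_inner_smul_right,
    real_inner_self_eq_norm_sq]
  ring

theorem outgoing_incoming_energy_identity (a b : ℝ) {v : ℝ → ℝ → E} {u : ℝ → ℝ → F}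
    (hv : DifferentiableAt ℝ (uncurry v) (τ, ρ)) (hu : DifferentiableAt ℝ (uncurry u) (τ, ρ)) :
    pd1 (fun τ' ρ' => (1 + τ') * ‖v τ' ρ'‖ ^ 2 + (1 - τ') * ‖u τ' ρ'‖ ^ 2) τ ρ
      + pd2 (fun τ' ρ' => ρ' * ‖u τ' ρ'‖ ^ 2 - ρ' * ‖v τ' ρ'‖ ^ 2) τ ρ
      + 2 * a * ‖v τ ρ‖ ^ 2 + 2 * b * ‖u τ ρ‖ ^ 2
      = 2 * (⟪v τ ρ, transport 1 a v τ ρ⟫_ℝ + ⟪u τ ρ, transport (-1) b u τ ρ⟫_ℝ) := by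
  have density_eq : (fun τ' ρ' => (1 + τ') * ‖v τ' ρ'‖ ^ 2 + (1 - τ') * ‖u τ' ρ'‖ ^ 2)
      = energyDensity 1 v + energyDensity (-1) u := by
    ext τ' ρ'
    simp only [energyDensity, Pi.add_apply]
    ring
  have flux_eq : (fun τ' ρ' => ρ' * ‖u τ' ρ'‖ ^ 2 - ρ' * ‖v τ' ρ'‖ ^ 2)
      = energyFlux 1 v + energyFlux (-1) u := by
    ext τ' ρ'
    simp only [energyFlux, Pi.add_apply]
    ring
  rw [density_eq, flux_eq,
    pd1_add (hasDerivAt_energyDensity 1 hv).differentiableAt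
      (hasDerivAt_energyDensity (-1) hu).differentiableAt,
    pd2_add (hasDerivAt_energyFlux 1 hv).differentiableAt
      (hasDerivAt_energyFlux (-1) hu).differentiableAt]
  linear_combination transport_energy_identity 1 a hv + transport_energy_identity (-1) b hu

end Energy

theorem stmt0_general {E F : Type*} [NormedAddCommGroup E] [InnerProductSpace ℝ E]
    [NormedAddCommGroup F] [InnerProductSpace ℝ F] (q p : ℕ) (a b : ℝ)
    (u g : ℝ → ℝ → E) (v f : ℝ → ℝ → F)
    (hu : ContDiff ℝ (q + p + 1 : ℕ) (uncurry u)) (hv : ContDiff ℝ (q + p + 1 : ℕ) (uncurry v))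
    (houtgoing : ∀ τ ρ : ℝ, (1 + τ) • pd1 v τ ρ - ρ • pd2 v τ ρ - f τ ρ + a • v τ ρ = 0)
    (hincoming : ∀ τ ρ : ℝ, (1 - τ) • pd1 u τ ρ + ρ • pd2 u τ ρ - g τ ρ + b • u τ ρ = 0)
    (τ ρ : ℝ) :
    pd1 (fun τ' ρ' => (1 + τ') * ‖(pd1^[q] (pd2^[p] v)) τ' ρ'‖ ^ 2
          + (1 - τ') * ‖(pd1^[q] (pd2^[p] u)) τ' ρ'‖ ^ 2) τ ρ
      + pd2 (fun τ' ρ' => ρ' * ‖(pd1^[q] (pd2^[p] u)) τ' ρ'‖ ^ 2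
          - ρ' * ‖(pd1^[q] (pd2^[p] v)) τ' ρ'‖ ^ 2) τ ρ
      + 2 * (a + q - p) * ‖(pd1^[q] (pd2^[p] v)) τ ρ‖ ^ 2
      + 2 * (b - q + p) * ‖(pd1^[q] (pd2^[p] u)) τ ρ‖ ^ 2
      = 2 * (⟪(pd1^[q] (pd2^[p] v)) τ ρ, (pd1^[q] (pd2^[p] f)) τ ρ⟫_ℝ
          + ⟪(pd1^[q] (pd2^[p] u)) τ ρ, (pd1^[q] (pd2^[p] g)) τ ρ⟫_ℝ) := by
  have hf : f = transport 1 a v := by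
    funext τ ρ
    rw [transport]
    linear_combination (norm := module) -houtgoing τ ρ
  have hg : g = transport (-1) b u := by
    funext τ ρ
    rw [transport]
    linear_combination (norm := module) -hincoming τ ρ
  rw [hf, hg, iterate_pd1_iterate_pd2_transport 1 a hv,
    iterate_pd1_iterate_pd2_transport (-1) b hu, ← outgoing_incoming_energy_identity _ _
      (differentiable_iterate_pd1_iterate_pd2 hv _) (differentiable_iterate_pd1_iterate_pd2 hu _)]
  ring

/-- The pointwise energy identity for the model outgoing/incoming transport equations. -/
theorem stmt0 (q p : ℕ) (a b : ℝ) (u v f g : ℝ → ℝ → ℂ)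
    (hu : ContDiff ℝ (⊤ : ℕ∞) (Function.uncurry u))
    (hv : ContDiff ℝ (⊤ : ℕ∞) (Function.uncurry v))
    (hf : ContDiff ℝ (⊤ : ℕ∞) (Function.uncurry f))
    (hg : ContDiff ℝ (⊤ : ℕ∞) (Function.uncurry g))
    (houtgoing : ∀ τ ρ : ℝ,
      (1 + (τ : ℂ)) * pd1 v τ ρ - (ρ : ℂ) * pd2 v τ ρ - f τ ρ + (a : ℂ) * v τ ρ = 0)
    (hincoming : ∀ τ ρ : ℝ,
      (1 - (τ : ℂ)) * pd1 u τ ρ + (ρ : ℂ) * pd2 u τ ρ - g τ ρ + (b : ℂ) * u τ ρ = 0) :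
    ∀ τ ρ : ℝ,
      pd1 (fun τ' ρ' => (1 + τ') * Complex.normSq (Dop q p v τ' ρ')
            + (1 - τ') * Complex.normSq (Dop q p u τ' ρ')) τ ρ
      + pd2 (fun τ' ρ' => ρ' * Complex.normSq (Dop q p u τ' ρ')
            - ρ' * Complex.normSq (Dop q p v τ' ρ')) τ ρ
      + 2 * (a + q - p) * Complex.normSq (Dop q p v τ ρ)
      + 2 * (b - q + p) * Complex.normSq (Dop q p u τ ρ)
      = 2 * (Dop q p f τ ρ * starRingEnd ℂ (Dop q p v τ ρ)
            + Dop q p g τ ρ * starRingEnd ℂ (Dop q p u τ ρ)).re := by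
  intro τ ρ
  simpa [Dop, Complex.normSq_eq_norm_sq, Complex.inner, mul_comm] using
    stmt0_general q p a b u g v f (hu.of_le (by exact_mod_cast le_top))
      (hv.of_le (by exact_mod_cast le_top)) (by simpa using houtgoing)
      (by simpa using hincoming) τ ρ
end

section
/- Let ε₀ > 0, A ≥ 0 and B > 0 be real numbers, and let f : [0, ε₀] → ℝ be continuous with f(0) = 0 and differentiable on (0, ε₀], satisfying ε·f'(ε) ≤ A − B·f(ε) for every ε ∈ (0, ε₀]. Then f(ε) ≤ A/B for every ε ∈ [0, ε₀]. -/
/-!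
The factor `x ^ (B - 1)` turns `x * f' ≤ B * (c - f)` into `(x ^ B * (f - c))' ≤ 0` on `x > 0`. As
`B > 0`, the weight `x ^ B` kills any bounded contribution of `f` at `0`, so the antitone function
`x ^ B * (f - c)` is at most `0`.
-/

open Set Filter Topology

section WeightedDecay

variable {B c : ℝ} {f f' : ℝ → ℝ}

theorem hasDerivAt_rpow_mul_sub_const {x m : ℝ} (hx : 0 < x) (hf : HasDerivAt f m x) :
    HasDerivAt (fun y ↦ y ^ B * (f y - c)) (x ^ (B - 1) * (x * m - B * (c - f x))) x := by
  have hpow : x ^ B = x ^ (B - 1) * x := by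
    rw [← Real.rpow_add_one hx.ne', sub_add_cancel]
  refine ((Real.hasDerivAt_rpow_const (Or.inl hx.ne')).mul (hf.sub_const c)).congr_deriv ?_
  rw [hpow]
  ring

theorem antitoneOn_rpow_mul_sub_const {s : Set ℝ} (hs : Convex ℝ s) (hpos : s ⊆ Ioi 0)
    (hcont : ContinuousOn f s) (hderiv : ∀ x ∈ interior s, HasDerivAt f (f' x) x)
    (hineq : ∀ x ∈ interior s, x * f' x ≤ B * (c - f x)) :
    AntitoneOn (fun x ↦ x ^ B * (f x - c)) s := by
  have hpos' : ∀ x ∈ interior s, 0 < x := fun x hx ↦ hpos (interior_subset hx)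
  refine antitoneOn_of_hasDerivWithinAt_nonpos hs ?_
    (fun x hx ↦ (hasDerivAt_rpow_mul_sub_const (hpos' x hx) (hderiv x hx)).hasDerivWithinAt)
    (fun x hx ↦ mul_nonpos_of_nonneg_of_nonpos (Real.rpow_nonneg (hpos' x hx).le _)
      (sub_nonpos.2 (hineq x hx)))
  exact (continuousOn_id.rpow_const fun x hx ↦ Or.inl (hpos hx).ne').mul
    (hcont.sub continuousOn_const)

theorem tendsto_rpow_mul_const_nhdsGT_zero (hB : 0 < B) (a : ℝ) :
    Tendsto (fun x : ℝ ↦ x ^ B * a) (𝓝[>] 0) (𝓝 0) := by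
  have h : ContinuousAt (fun x : ℝ ↦ x ^ B * a) 0 :=
    (Real.continuous_rpow_const hB.le).continuousAt.mul continuousAt_const
  simpa only [Real.zero_rpow hB.ne', zero_mul] using h.tendsto.mono_left nhdsWithin_le_nhds

theorem le_of_mul_deriv_le_of_isBoundedUnder {b : ℝ} (hB : 0 < B)
    (hbdd : IsBoundedUnder (· ≤ ·) (𝓝[>] 0) f) (hcont : ContinuousOn f (Ioc 0 b))
    (hderiv : ∀ x ∈ Ioo 0 b, HasDerivAt f (f' x) x)
    (hineq : ∀ x ∈ Ioo 0 b, x * f' x ≤ B * (c - f x)) {x : ℝ} (hx : x ∈ Ioc 0 b) :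
    f x ≤ c := by
  obtain ⟨M, hM⟩ := hbdd.eventually_le
  have hanti : AntitoneOn (fun y ↦ y ^ B * (f y - c)) (Ioc 0 b) :=
    antitoneOn_rpow_mul_sub_const (convex_Ioc 0 b) Ioc_subset_Ioi_self hcont
      (by simpa only [interior_Ioc] using hderiv) (by simpa only [interior_Ioc] using hineq)
  have hbound : ∀ᶠ y in 𝓝[>] 0, x ^ B * (f x - c) ≤ y ^ B * (M - c) := by
    filter_upwards [hM, Ioo_mem_nhdsGT hx.1] with y hyM hy
    calc
      x ^ B * (f x - c) ≤ y ^ B * (f y - c) := hanti ⟨hy.1, hy.2.le.trans hx.2⟩ hx hy.2.le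
      _ ≤ y ^ B * (M - c) :=
        mul_le_mul_of_nonneg_left (sub_le_sub_right hyM c) (Real.rpow_nonneg hy.1.le B)
  have hnonpos : x ^ B * (f x - c) ≤ 0 :=
    ge_of_tendsto (tendsto_rpow_mul_const_nhdsGT_zero hB (M - c)) hbound
  exact sub_nonpos.1 (nonpos_of_mul_nonpos_right hnonpos (Real.rpow_pos_of_pos hx.1 B))

end WeightedDecay

theorem stmt3_general {ε₀ A B : ℝ} (hε₀ : 0 < ε₀) (hB : 0 < B) {f f' : ℝ → ℝ}
    (hcont : ContinuousOn f (Icc 0 ε₀)) (hderiv : ∀ ε ∈ Ioo 0 ε₀, HasDerivAt f (f' ε) ε)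
    (hineq : ∀ ε ∈ Ioo 0 ε₀, ε * f' ε ≤ A - B * f ε) :
    ∀ ε ∈ Icc 0 ε₀, f ε ≤ A / B := by
  have hbdd : IsBoundedUnder (· ≤ ·) (𝓝[>] 0) f :=
    ((hcont 0 (left_mem_Icc.2 hε₀.le)).mono_of_mem_nhdsWithin
      (Icc_mem_nhdsGT hε₀)).tendsto.isBoundedUnder_le
  have hineq' : ∀ ε ∈ Ioo 0 ε₀, ε * f' ε ≤ B * (A / B - f ε) := fun ε hε ↦ by
    simpa only [mul_sub, mul_div_cancel₀ A hB.ne'] using hineq ε hε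
  have hIoc : ∀ ε ∈ Ioc 0 ε₀, f ε ≤ A / B := fun _ ↦
    le_of_mul_deriv_le_of_isBoundedUnder hB hbdd (hcont.mono Ioc_subset_Icc_self) hderiv hineq'
  rw [← closure_Ioc hε₀.ne] at hcont ⊢
  exact fun _ hε ↦ le_on_closure hIoc hcont continuousOn_const hε

/-- A degenerate Grönwall-type lemma: if `f` is continuous on `[0, ε₀]` with `f 0 = 0`,
differentiable on `(0, ε₀]` and satisfies `ε f'(ε) ≤ A − B f(ε)` there (with `A ≥ 0`,
`B > 0`), then `f ≤ A/B` on `[0, ε₀]`. -/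
theorem stmt3 (ε₀ A B : ℝ) (hε₀ : 0 < ε₀) (hA : 0 ≤ A) (hB : 0 < B)
    (f : ℝ → ℝ) (hcont : ContinuousOn f (Set.Icc 0 ε₀)) (hf0 : f 0 = 0)
    (hdiff : ∀ ε ∈ Set.Ioc (0 : ℝ) ε₀, DifferentiableAt ℝ f ε)
    (hineq : ∀ ε ∈ Set.Ioc (0 : ℝ) ε₀, ε * deriv f ε ≤ A - B * f ε) :
    ∀ ε ∈ Set.Icc (0 : ℝ) ε₀, f ε ≤ A / B :=
  stmt3_general hε₀ hB hcont (fun ε hε ↦ (hdiff ε (Ioo_subset_Ioc_self hε)).hasDerivAt)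
    fun ε hε ↦ hineq ε (Ioo_subset_Ioc_self hε)
end

section
/- Let p, q be natural numbers and σ an integer with |σ| ≤ q < p. Then the Jacobi polynomial with degenerate parameters vanishes identically: P_{p+q}^{(−p+σ, −p−σ)}(τ) = 0 for every τ ∈ ℝ. -/
/-- Generalized binomial coefficient `z(z−1)⋯(z−r+1)/r!`. -/
noncomputable def gbinom (z : ℝ) (r : ℕ) : ℝ :=
  (∏ i ∈ Finset.range r, (z - i)) / (Nat.factorial r)

/-- The Jacobi polynomial `P_n^{(α,β)}(τ)`. -/
noncomputable def jacobiP (n : ℕ) (α β : ℝ) (τ : ℝ) : ℝ :=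
  ∑ l ∈ Finset.range (n + 1),
    gbinom ((n : ℝ) + α) l * gbinom ((n : ℝ) + β) (n - l) *
      ((τ - 1) / 2) ^ (n - l) * ((τ + 1) / 2) ^ l

theorem gbinom_natCast (a r : ℕ) : gbinom a r = a.choose r := by
  rw [gbinom, Nat.cast_choose_eq_descPochhammer_div, descPochhammer_eval_eq_prod_range]

theorem jacobiP_of_add_eq_natCast {n a b : ℕ} {α β : ℝ} (hα : n + α = a) (hβ : n + β = b)
    (τ : ℝ) :
    jacobiP n α β τ = ∑ l ∈ Finset.range (n + 1),
      (a.choose l : ℝ) * b.choose (n - l) * ((τ - 1) / 2) ^ (n - l) * ((τ + 1) / 2) ^ l := by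
  simp only [jacobiP, hα, hβ, gbinom_natCast]

-- The lower indices `l` and `n - l` add up to `n > a + b`, so one exceeds its upper index.
theorem choose_mul_choose_sub_eq_zero {a b n : ℕ} (h : a + b < n) (l : ℕ) :
    a.choose l * b.choose (n - l) = 0 := by
  obtain hl | hl : a < l ∨ b < n - l := by lia
  · rw [Nat.choose_eq_zero_of_lt hl, zero_mul]
  · rw [Nat.choose_eq_zero_of_lt hl, mul_zero]

theorem stmt9_general {n : ℕ} {α β : ℤ} (hα : 0 ≤ n + α) (hβ : 0 ≤ n + β)
    (hαβ : n + α + β < 0) (τ : ℝ) : jacobiP n α β τ = 0 := by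
  obtain ⟨a, ha⟩ := Int.eq_ofNat_of_zero_le hα
  obtain ⟨b, hb⟩ := Int.eq_ofNat_of_zero_le hβ
  have hab : a + b < n := by lia
  rw [jacobiP_of_add_eq_natCast (mod_cast ha) (mod_cast hb)]
  refine Finset.sum_eq_zero fun l _ ↦ ?_
  rw [← Nat.cast_mul, choose_mul_choose_sub_eq_zero hab, Nat.cast_zero, zero_mul, zero_mul]

/-- Vanishing of the Jacobi polynomial with degenerate parameters:
for `|σ| ≤ q < p`, `P_{p+q}^{(−p+σ, −p−σ)} ≡ 0`. -/
theorem stmt9 (p q : ℕ) (σ : ℤ) (hσ : |σ| ≤ (q : ℤ)) (hqp : q < p) (τ : ℝ) :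
    jacobiP (p + q) (-(p : ℝ) + (σ : ℝ)) (-(p : ℝ) - (σ : ℝ)) τ = 0 := by
  obtain ⟨hσ_lower, hσ_upper⟩ := abs_le.mp hσ
  exact_mod_cast stmt9_general (n := p + q) (α := -p + σ) (β := -p - σ) (by lia) (by lia) (by lia) τ
end

section
/- Let p be a real number and a, b natural numbers; set q = (a+b)/2 and σ = (a−b)/2. Then for all complex constants c, d, the function y(τ) = c·Q₁(τ) + d·Q₃(τ) satisfies, at every τ ∈ (−1,1), the equation (1−τ²)·y''(τ) + 2·((p−1)·τ − σ)·y'(τ) + (q(q+1) − p(p−1))·y(τ) = 0. -/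
/-- The solution `Q₁(τ) = ((1−τ)/2)^{p−σ}·P_a^{(p−σ,−p−σ)}(τ)`. -/
noncomputable def Q1 (p σ : ℝ) (a : ℕ) (τ : ℝ) : ℝ :=
  ((1 - τ) / 2) ^ (p - σ) * jacobiP a (p - σ) (-p - σ) τ

/-- The solution `Q₃(τ) = ((1+τ)/2)^{p+σ}·P_b^{(σ−p,p+σ)}(τ)`. -/
noncomputable def Q3 (p σ : ℝ) (b : ℕ) (τ : ℝ) : ℝ :=
  ((1 + τ) / 2) ^ (p + σ) * jacobiP b (σ - p) (p + σ) τ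

/-!
The equation says that `y` is an eigenfunction, with eigenvalue `-(q (q + 1) - p (p - 1))`, of the
Jacobi operator with parameters `(σ - p, -p - σ)`. Conjugating the Jacobi operator by
`((1 - t) / 2) ^ α` replaces `α` by `-α` and shifts eigenvalues by `-α (β + 1)`; the reflection
`t ↦ -t` exchanges `α` and `β`, which gives the analogous rule for `((1 + t) / 2) ^ β`. Hence
`Q₁` and `Q₃` are eigenfunctions because Jacobi polynomials are. For these, the operator acts on
`((t - 1) / 2) ^ (n - l) * ((t + 1) / 2) ^ l` by `-n (n + α + β + 1)` plus differences of
neighbouring monomials of the same degree, and the recurrence of the binomial coefficients makes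
the differences telescope away.
-/

section Coefficients

lemma succ_mul_gbinom_succ (z : ℝ) (r : ℕ) :
    ((r : ℝ) + 1) * gbinom z (r + 1) = (z - r) * gbinom z r := by
  have h_factorial : (r.factorial : ℝ) ≠ 0 := by positivity
  have h_succ : (r : ℝ) + 1 ≠ 0 := by positivity
  unfold gbinom
  rw [Finset.prod_range_succ, Nat.factorial_succ]
  push_cast
  field_simp

/-- The coefficient of `((t - 1) / 2) ^ (n - l) * ((t + 1) / 2) ^ l` in the Jacobi polynomial
`P_n^{(α,β)}`; meaningful for `l ≤ n`. -/
noncomputable def jacobiCoeff (n : ℕ) (α β : ℝ) (l : ℕ) : ℝ :=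
  gbinom (n + α) l * gbinom (n + β) (n - l)

lemma jacobiCoeff_succ {n l : ℕ} (α β : ℝ) (hl : l < n) :
    ((l + 1 : ℕ) : ℝ) * ((l + 1 : ℕ) + β) * jacobiCoeff n α β (l + 1)
      = ((n - l : ℕ) : ℝ) * ((n - l : ℕ) + α) * jacobiCoeff n α β l := by
  obtain ⟨k, rfl⟩ := Nat.exists_eq_add_of_lt hl
  have h_sub : l + k + 1 - l = k + 1 := by omega
  have h_sub_succ : l + k + 1 - (l + 1) = k := by omega
  have hα := succ_mul_gbinom_succ ((l + k + 1 : ℕ) + α) l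
  have hβ := succ_mul_gbinom_succ ((l + k + 1 : ℕ) + β) k
  simp only [jacobiCoeff, h_sub, h_sub_succ]
  push_cast at hα hβ ⊢
  linear_combination
    (l + 1 + β) * gbinom (l + k + 1 + β) k * hα - (k + 1 + α) * gbinom (l + k + 1 + α) l * hβ

lemma sum_jacobiCoeff_mul_sub_eq_zero (n : ℕ) (α β : ℝ) (X : ℕ → ℝ) :
    ∑ l ∈ Finset.range (n + 1), jacobiCoeff n α β l *
      (((n - l : ℕ) : ℝ) * ((n - l : ℕ) + α) * (X l - X (l + 1))
        + l * (l + β) * (X l - X (l - 1))) = 0 := by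
  simp only [mul_add (jacobiCoeff n α β _), Finset.sum_add_distrib]
  rw [Finset.sum_range_succ, Finset.sum_range_succ' (fun l ↦ jacobiCoeff n α β l * (l * _ * _))]
  simp only [Nat.sub_self, Nat.cast_zero, zero_mul, mul_zero, add_zero, ← Finset.sum_add_distrib]
  refine Finset.sum_eq_zero fun l hl ↦ ?_
  rw [Nat.add_sub_cancel]
  linear_combination (X (l + 1) - X l) * jacobiCoeff_succ α β (Finset.mem_range.mp hl)

end Coefficients

section JacobiOperator

open Filter Topology

variable {E : Type*} [NormedAddCommGroup E] [NormedSpace ℝ E] {α β x : ℝ} {f g : ℝ → E} {v w : E}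

/-- The Jacobi differential operator `(1 - t²) d²/dt² + (β - α - (α + β + 2) t) d/dt` takes `f` to
the value `v` at `x`. As in `HasDerivAt`, the existence of the derivatives is part of the claim: `f`
is differentiable near `x` and its derivative is differentiable at `x`. -/
def HasJacobiOpAt (α β : ℝ) (f : ℝ → E) (v : E) (x : ℝ) : Prop :=
  ∃ (f' : ℝ → E) (f'' : E), (∀ᶠ t in 𝓝 x, HasDerivAt f (f' t) t) ∧ HasDerivAt f' f'' x ∧
    (1 - x ^ 2) • f'' + (β - α - (α + β + 2) * x) • f' x = v

namespace HasJacobiOpAt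

lemma eq_deriv (h : HasJacobiOpAt α β f v x) :
    (1 - x ^ 2) • deriv (deriv f) x + (β - α - (α + β + 2) * x) • deriv f x = v := by
  obtain ⟨f', f'', hf, hf', rfl⟩ := h
  have h_deriv : deriv f =ᶠ[𝓝 x] f' := hf.mono fun _ ht ↦ ht.deriv
  rw [h_deriv.deriv_eq, hf'.deriv, h_deriv.self_of_nhds]

lemma zero : HasJacobiOpAt α β (fun _ ↦ (0 : E)) 0 x :=
  ⟨fun _ ↦ 0, 0, .of_forall fun _ ↦ hasDerivAt_const _ _, hasDerivAt_const _ _, by simp⟩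

lemma add (hf : HasJacobiOpAt α β f v x) (hg : HasJacobiOpAt α β g w x) :
    HasJacobiOpAt α β (fun t ↦ f t + g t) (v + w) x := by
  obtain ⟨f', f'', hf, hf', rfl⟩ := hf
  obtain ⟨g', g'', hg, hg', rfl⟩ := hg
  refine ⟨fun t ↦ f' t + g' t, f'' + g'', ?_, hf'.add hg', by module⟩
  filter_upwards [hf, hg] with t hft hgt using hft.add hgt

lemma sum {ι : Type*} {s : Finset ι} {F : ι → ℝ → E} {V : ι → E}
    (h : ∀ i ∈ s, HasJacobiOpAt α β (F i) (V i) x) :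
    HasJacobiOpAt α β (fun t ↦ ∑ i ∈ s, F i t) (∑ i ∈ s, V i) x := by
  induction s using Finset.cons_induction with
  | empty => simpa only [Finset.sum_empty] using zero
  | cons i s hi ih =>
    simp only [Finset.sum_cons]
    exact (h i (s.mem_cons_self i)).add (ih fun j hj ↦ h j (Finset.mem_cons_of_mem hj))

lemma smul_const {φ : ℝ → ℝ} {r : ℝ} (h : HasJacobiOpAt α β φ r x) (c : E) :
    HasJacobiOpAt α β (fun t ↦ φ t • c) (r • c) x := by
  obtain ⟨φ', φ'', hφ, hφ', rfl⟩ := h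
  refine ⟨fun t ↦ φ' t • c, φ'' • c, hφ.mono fun _ ht ↦ ht.smul_const c, hφ'.smul_const c, ?_⟩
  simp only [smul_eq_mul]
  module

lemma comp_neg (h : HasJacobiOpAt α β f v (-x)) : HasJacobiOpAt β α (fun t ↦ f (-t)) v x := by
  obtain ⟨f', f'', hf, hf', rfl⟩ := h
  refine ⟨fun t ↦ -f' (-t), f'', ?_, ?_, by module⟩
  · filter_upwards [continuous_neg.continuousAt.eventually hf] with t ht
    simpa only [Function.comp_def, neg_smul, one_smul] using ht.scomp t (hasDerivAt_neg t)
  · simpa only [Function.comp_def, neg_smul, one_smul, neg_neg]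
      using (hf'.scomp x (hasDerivAt_neg x)).fun_neg

end HasJacobiOpAt

lemma hasDerivAt_half_one_sub_rpow (r : ℝ) (hx : x ≠ 1) :
    HasDerivAt (fun t : ℝ ↦ ((1 - t) / 2) ^ r) (-(r / 2) * ((1 - x) / 2) ^ (r - 1)) x := by
  have h_base : HasDerivAt (fun t : ℝ ↦ (1 - t) / 2) (-1 / 2) x :=
    ((hasDerivAt_id x).const_sub 1).div_const 2
  have h_ne : (1 - x) / 2 ≠ 0 := div_ne_zero (sub_ne_zero.mpr hx.symm) two_ne_zero
  exact (h_base.rpow_const (Or.inl h_ne)).congr_deriv (by ring)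

namespace HasJacobiOpAt

lemma one_sub_rpow_smul (h : HasJacobiOpAt α β f v x) (hx : x ≠ 1) :
    HasJacobiOpAt (-α) β (fun t ↦ ((1 - t) / 2) ^ α • f t)
      (((1 - x) / 2) ^ α • (v - (α * (β + 1)) • f x)) x := by
  obtain ⟨f', f'', hf, hf', rfl⟩ := h
  have h_deriv {t : ℝ} (ht : t ≠ 1) (r : ℝ) := hasDerivAt_half_one_sub_rpow r ht
  refine ⟨fun t ↦ ((1 - t) / 2) ^ α • f' t + (-(α / 2) * ((1 - t) / 2) ^ (α - 1)) • f t, _, ?_,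
    ((h_deriv hx α).smul hf').add
    (((h_deriv hx (α - 1)).const_mul (-(α / 2))).smul hf.self_of_nhds), ?_⟩
  · filter_upwards [hf, eventually_ne_nhds hx] with t hft ht using (h_deriv ht α).smul hft
  have h_ne : (1 - x) / 2 ≠ 0 := div_ne_zero (sub_ne_zero.mpr hx.symm) two_ne_zero
  have h_pred : ((1 - x) / 2) ^ (α - 1) = ((1 - x) / 2) ^ (α - 1 - 1) * ((1 - x) / 2) := by
    rw [← Real.rpow_add_one h_ne, sub_add_cancel]
  have h_self : ((1 - x) / 2) ^ α = ((1 - x) / 2) ^ (α - 1) * ((1 - x) / 2) := by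
    rw [← Real.rpow_add_one h_ne, sub_add_cancel]
  simp only [h_self, h_pred]
  module

lemma one_add_rpow_smul (h : HasJacobiOpAt α β f v x) (hx : x ≠ -1) :
    HasJacobiOpAt α (-β) (fun t ↦ ((1 + t) / 2) ^ β • f t)
      (((1 + x) / 2) ^ β • (v - (β * (α + 1)) • f x)) x := by
  have h_neg : HasJacobiOpAt β α (fun t ↦ f (-t)) v (-x) := comp_neg (by rwa [neg_neg])
  have hx_neg : -x ≠ 1 := fun hx' ↦ hx (neg_eq_iff_eq_neg.mp hx')
  simpa only [sub_neg_eq_add, neg_neg]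
    using (h_neg.one_sub_rpow_smul hx_neg).comp_neg

end HasJacobiOpAt

end JacobiOperator

section JacobiPolynomial

/-- The monomials `((t - 1) / 2) ^ m * ((t + 1) / 2) ^ l` in which `jacobiP` is expanded. -/
noncomputable def jacobiMonomial (m l : ℕ) (t : ℝ) : ℝ :=
  ((t - 1) / 2) ^ m * ((t + 1) / 2) ^ l

lemma jacobiP_eq_sum_jacobiMonomial (n : ℕ) (α β : ℝ) :
    jacobiP n α β
      = fun t ↦ ∑ l ∈ Finset.range (n + 1), jacobiMonomial (n - l) l t • jacobiCoeff n α β l := by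
  funext t
  refine Finset.sum_congr rfl fun l _ ↦ ?_
  rw [jacobiMonomial, jacobiCoeff, smul_eq_mul]
  ring

lemma hasDerivAt_jacobiMonomial (m l : ℕ) (x : ℝ) :
    HasDerivAt (jacobiMonomial m l)
      (m / 2 * jacobiMonomial (m - 1) l x + l / 2 * jacobiMonomial m (l - 1) x) x := by
  have h_sub : HasDerivAt (fun t : ℝ ↦ (t - 1) / 2) (1 / 2) x :=
    ((hasDerivAt_id x).sub_const 1).div_const 2
  have h_add : HasDerivAt (fun t : ℝ ↦ (t + 1) / 2) (1 / 2) x :=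
    ((hasDerivAt_id x).add_const 1).div_const 2
  refine ((h_sub.pow m).mul (h_add.pow l)).congr_deriv ?_
  simp only [jacobiMonomial, Pi.pow_apply]
  ring

lemma hasJacobiOpAt_jacobiMonomial (α β : ℝ) (m l : ℕ) (x : ℝ) :
    HasJacobiOpAt α β (jacobiMonomial m l)
      (m * (m + α) * (jacobiMonomial m l x - jacobiMonomial (m - 1) (l + 1) x)
        + l * (l + β) * (jacobiMonomial m l x - jacobiMonomial (m + 1) (l - 1) x)
        - (m + l) * (m + l + α + β + 1) * jacobiMonomial m l x) x := by
  refine ⟨_, _, .of_forall (hasDerivAt_jacobiMonomial m l),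
    ((hasDerivAt_jacobiMonomial (m - 1) l x).const_mul (m / 2 : ℝ)).add
      ((hasDerivAt_jacobiMonomial m (l - 1) x).const_mul (l / 2 : ℝ)), ?_⟩
  simp only [jacobiMonomial, smul_eq_mul]
  -- The case split resolves the truncated exponents `m - 1`, `m - 1 - 1`, `l - 1`, `l - 1 - 1`.
  rcases m with _ | _ | m <;> rcases l with _ | _ | l <;>
    simp only [Nat.cast_zero, Nat.add_sub_cancel, Nat.zero_sub] <;> push_cast <;> ring

lemma hasJacobiOpAt_jacobiP (n : ℕ) (α β x : ℝ) :
    HasJacobiOpAt α β (jacobiP n α β) (-(n * (n + α + β + 1)) * jacobiP n α β x) x := by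
  let X (l : ℕ) : ℝ := jacobiMonomial (n - l) l x
  let T (l : ℕ) : ℝ :=
    ((n - l : ℕ) : ℝ) * ((n - l : ℕ) + α) * (X l - X (l + 1)) + l * (l + β) * (X l - X (l - 1))
  have h_monomial (l : ℕ) (hl : l ∈ Finset.range (n + 1)) :
      HasJacobiOpAt α β (jacobiMonomial (n - l) l) (T l - n * (n + α + β + 1) * X l) x := by
    have hln : l ≤ n := Finset.mem_range_succ_iff.mp hl
    have h_cast : ((n - l : ℕ) : ℝ) + l = n := by exact_mod_cast Nat.sub_add_cancel hln
    have h_pred : (l : ℝ) * jacobiMonomial (n - l + 1) (l - 1) x = l * X (l - 1) := by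
      rcases l with _ | l
      · simp
      · simp only [X]
        congr 3
        omega
    convert hasJacobiOpAt_jacobiMonomial α β (n - l) l x using 1
    simp only [h_cast, X, T, Nat.sub_sub] at h_pred ⊢
    linear_combination (l + β) * h_pred
  have h_sum := HasJacobiOpAt.sum fun l hl ↦ (h_monomial l hl).smul_const (jacobiCoeff n α β l)
  have h_telescope : ∑ l ∈ Finset.range (n + 1), jacobiCoeff n α β l * T l = 0 :=
    sum_jacobiCoeff_mul_sub_eq_zero n α β X
  rw [jacobiP_eq_sum_jacobiMonomial]
  convert h_sum using 1
  calc -(n * (n + α + β + 1)) * ∑ l ∈ Finset.range (n + 1), X l • jacobiCoeff n α β l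
      = ∑ l ∈ Finset.range (n + 1), jacobiCoeff n α β l * T l
          + -(n * (n + α + β + 1)) * ∑ l ∈ Finset.range (n + 1), X l • jacobiCoeff n α β l := by
        rw [h_telescope, zero_add]
    _ = ∑ l ∈ Finset.range (n + 1), (T l - n * (n + α + β + 1) * X l) • jacobiCoeff n α β l := by
        rw [Finset.mul_sum, ← Finset.sum_add_distrib]
        refine Finset.sum_congr rfl fun l _ ↦ ?_
        simp only [smul_eq_mul]
        ring

end JacobiPolynomial

lemma hasJacobiOpAt_Q1 (p σ : ℝ) (a : ℕ) {x : ℝ} (hx : x ≠ 1) :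
    HasJacobiOpAt (σ - p) (-p - σ) (Q1 p σ a)
      (-((a - σ + p) * (a - σ - p + 1)) * Q1 p σ a x) x := by
  convert (hasJacobiOpAt_jacobiP a (p - σ) (-p - σ) x).one_sub_rpow_smul hx using 1
  · ring
  · rfl
  · simp only [Q1, smul_eq_mul]
    ring

lemma hasJacobiOpAt_Q3 (p σ : ℝ) (b : ℕ) {x : ℝ} (hx : x ≠ -1) :
    HasJacobiOpAt (σ - p) (-p - σ) (Q3 p σ b)
      (-((b + σ + p) * (b + σ - p + 1)) * Q3 p σ b x) x := by
  convert (hasJacobiOpAt_jacobiP b (σ - p) (p + σ) x).one_add_rpow_smul hx using 1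
  · ring
  · rfl
  · simp only [Q3, smul_eq_mul]
    ring

theorem stmt10_general {E : Type*} [NormedAddCommGroup E] [NormedSpace ℝ E]
    (p : ℝ) (a b : ℕ) (q σ : ℝ)
    (hq : q = ((a : ℝ) + (b : ℝ)) / 2) (hσ : σ = ((a : ℝ) - (b : ℝ)) / 2) (c d : E) :
    ∀ τ ∈ Set.Ioo (-1 : ℝ) 1,
      (1 - τ ^ 2) • deriv (deriv fun t : ℝ ↦ Q1 p σ a t • c + Q3 p σ b t • d) τ
        + (2 * ((p - 1) * τ - σ)) • deriv (fun t : ℝ ↦ Q1 p σ a t • c + Q3 p σ b t • d) τ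
        + (q * (q + 1) - p * (p - 1)) • (Q1 p σ a τ • c + Q3 p σ b τ • d) = 0 := by
  rintro τ ⟨hτ_left, hτ_right⟩
  have h_Q1 := (hasJacobiOpAt_Q1 p σ a hτ_right.ne).smul_const c
  have h_Q3 := (hasJacobiOpAt_Q3 p σ b hτ_left.ne').smul_const d
  have h_ode := (h_Q1.add h_Q3).eq_deriv
  have ha : (a : ℝ) - σ = q := by rw [hq, hσ]; ring
  have hb : (b : ℝ) + σ = q := by rw [hq, hσ]; ring
  rw [ha, hb] at h_ode
  linear_combination (norm := module) h_ode

/-- Every complex linear combination `y = c·Q₁ + d·Q₃` satisfies the Jacobi-type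
equation (C.1) governing asymptotic expansion coefficients near spatial infinity. -/
theorem stmt10 (p : ℝ) (a b : ℕ) (q σ : ℝ)
    (hq : q = ((a : ℝ) + (b : ℝ)) / 2) (hσ : σ = ((a : ℝ) - (b : ℝ)) / 2)
    (c d : ℂ) :
    ∀ τ ∈ Set.Ioo (-1 : ℝ) 1,
      ((1 - τ ^ 2 : ℝ) : ℂ)
          * deriv (deriv (fun t : ℝ => c * (Q1 p σ a t : ℂ) + d * (Q3 p σ b t : ℂ))) τ
        + ((2 * ((p - 1) * τ - σ) : ℝ) : ℂ)
          * deriv (fun t : ℝ => c * (Q1 p σ a t : ℂ) + d * (Q3 p σ b t : ℂ)) τ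
        + ((q * (q + 1) - p * (p - 1) : ℝ) : ℂ)
          * (c * (Q1 p σ a τ : ℂ) + d * (Q3 p σ b τ : ℂ)) = 0 := by
  simpa only [Complex.real_smul, mul_comm c, mul_comm d]
    using stmt10_general p a b q σ hq hσ c d
end

section
/- Let p be a real number and a, b natural numbers with (a+b)/2 < p; set q = (a+b)/2 and σ = (a−b)/2. Then the functions Q₁ and Q₃ are linearly independent as functions on (−1,1): if c, d are real numbers with c·Q₁(τ) + d·Q₃(τ) = 0 for all τ ∈ (−1,1), then c = 0 and d = 0. -/
/-!
Put `s = p + σ` and `u = (1 + τ) / 2`. As `τ → -1⁺`, the function `Q₁` tends to the value at `-1` of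
its Jacobi factor, while `Q₃` is `u ^ s` times a function tending to the value at `-1` of its own.
If both values and `s` are nonzero, the two functions have different orders `u ^ 0` and `u ^ s`, so
no nontrivial combination vanishes. The two values are `± binom(q - p, a)` and `± binom(q + p, b)`,
and `s = a - (q - p)`, so all three are nonzero as soon as `p` is not in `{-q, -q + 1, …, q}`.
-/

open Filter Set Topology

theorem gbinom_ne_zero {z : ℝ} {r : ℕ} (hz : ∀ i < r, z ≠ i) : gbinom z r ≠ 0 :=
  div_ne_zero
    (Finset.prod_ne_zero_iff.2 fun i hi => sub_ne_zero.2 (hz i (Finset.mem_range.1 hi)))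
    (Nat.cast_ne_zero.2 r.factorial_ne_zero)

theorem jacobiP_neg_one (n : ℕ) (α β : ℝ) :
    jacobiP n α β (-1) = (-1) ^ n * gbinom (n + β) n := by
  unfold jacobiP
  rw [Finset.sum_eq_single 0]
  · norm_num [gbinom, mul_comm]
  · intro l _ hl
    simp [hl]
  · simp

theorem jacobiP_neg_one_ne_zero {n : ℕ} {β : ℝ} (α : ℝ) (hβ : ∀ i < n, (n : ℝ) + β ≠ i) :
    jacobiP n α β (-1) ≠ 0 := by
  rw [jacobiP_neg_one]
  exact mul_ne_zero (pow_ne_zero n (by norm_num)) (gbinom_ne_zero hβ)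

theorem continuous_jacobiP (n : ℕ) (α β : ℝ) : Continuous (jacobiP n α β) := by
  unfold jacobiP
  fun_prop

section DistinctOrders

variable {ι : Type*} {l : Filter ι} [l.NeBot] {u f g : ι → ℝ} {s A B c d : ℝ}

theorem eq_zero_of_mul_add_mul_rpow_mul_eventuallyEq_zero_of_pos
    (hu : Tendsto u l (𝓝[>] 0)) (hf : Tendsto f l (𝓝 A)) (hg : Tendsto g l (𝓝 B))
    (hs : 0 < s) (hA : A ≠ 0) (hB : B ≠ 0)
    (h : (fun x => c * f x + d * (u x ^ s * g x)) =ᶠ[l] 0) : c = 0 ∧ d = 0 := by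
  have hus : Tendsto (fun x => u x ^ s) l (𝓝 0) := by
    simpa only [Real.zero_rpow hs.ne'] using
      (tendsto_nhds_of_tendsto_nhdsWithin hu).rpow_const (Or.inr hs.le)
  have hc : c = 0 := by
    have hlim : Tendsto (fun x => c * f x + d * (u x ^ s * g x)) l (𝓝 (c * A)) := by
      simpa only [zero_mul, mul_zero, add_zero] using
        (hf.const_mul c).add ((hus.mul hg).const_mul d)
    have hcA : c * A = 0 := tendsto_nhds_unique (hlim.congr' h) tendsto_const_nhds
    exact (mul_eq_zero.1 hcA).resolve_right hA
  have hdg : (fun x => d * g x) =ᶠ[l] 0 := by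
    filter_upwards [h, hu eventually_mem_nhdsWithin] with x hx hux
    have hpow : u x ^ s ≠ 0 := (Real.rpow_pos_of_pos hux s).ne'
    have hx' : u x ^ s * (d * g x) = 0 := by
      simpa [hc, mul_left_comm] using hx
    exact (mul_eq_zero.1 hx').resolve_left hpow
  have hdB : d * B = 0 :=
    tendsto_nhds_unique ((hg.const_mul d).congr' hdg) tendsto_const_nhds
  exact ⟨hc, (mul_eq_zero.1 hdB).resolve_right hB⟩

theorem eq_zero_of_mul_add_mul_rpow_mul_eventuallyEq_zero
    (hu : Tendsto u l (𝓝[>] 0)) (hf : Tendsto f l (𝓝 A)) (hg : Tendsto g l (𝓝 B))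
    (hs : s ≠ 0) (hA : A ≠ 0) (hB : B ≠ 0)
    (h : (fun x => c * f x + d * (u x ^ s * g x)) =ᶠ[l] 0) : c = 0 ∧ d = 0 := by
  rcases hs.lt_or_gt with hneg | hpos
  · -- Dividing by `u ^ s` exchanges the two terms and replaces `s` by `-s`.
    have hswap : (fun x => d * g x + c * (u x ^ (-s) * f x)) =ᶠ[l] 0 := by
      filter_upwards [h, hu eventually_mem_nhdsWithin] with x hx hux
      have hcancel : u x ^ (-s) * u x ^ s = 1 := by
        rw [← Real.rpow_add hux, neg_add_cancel, Real.rpow_zero]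
      calc d * g x + c * (u x ^ (-s) * f x)
          = u x ^ (-s) * (c * f x + d * (u x ^ s * g x)) := by
            linear_combination (-d * g x) * hcancel
        _ = 0 := mul_eq_zero_of_right _ hx
    exact (eq_zero_of_mul_add_mul_rpow_mul_eventuallyEq_zero_of_pos hu hg hf
      (neg_pos.2 hneg) hB hA hswap).symm
  · exact eq_zero_of_mul_add_mul_rpow_mul_eventuallyEq_zero_of_pos hu hf hg hpos hA hB h

end DistinctOrders

theorem tendsto_one_add_div_two_nhdsGT_neg_one :
    Tendsto (fun τ : ℝ => (1 + τ) / 2) (𝓝[>] (-1)) (𝓝[>] 0) := by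
  refine tendsto_nhdsWithin_iff.2 ⟨?_, ?_⟩
  · have hcont : Continuous fun τ : ℝ => (1 + τ) / 2 := by fun_prop
    exact (hcont.tendsto' (-1) 0 (by norm_num)).mono_left nhdsWithin_le_nhds
  · filter_upwards [self_mem_nhdsWithin] with τ (hτ : -1 < τ)
    exact mem_Ioi.2 (by linarith)

theorem tendsto_rpow_mul_jacobiP_nhds_neg_one (n : ℕ) (μ α β : ℝ) :
    Tendsto (fun τ => ((1 - τ) / 2) ^ μ * jacobiP n α β τ) (𝓝 (-1))
      (𝓝 (jacobiP n α β (-1))) := by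
  have hbase : Tendsto (fun τ : ℝ => (1 - τ) / 2) (𝓝 (-1)) (𝓝 1) := by
    have hcont : Continuous fun τ : ℝ => (1 - τ) / 2 := by fun_prop
    exact hcont.tendsto' (-1) 1 (by norm_num)
  simpa only [Real.one_rpow, one_mul] using
    (hbase.rpow_const (Or.inl one_ne_zero)).mul ((continuous_jacobiP n α β).tendsto (-1))

theorem eq_zero_of_mul_rpow_mul_jacobiP_add_eq_zero {a b : ℕ} {μ s α β γ δ c d : ℝ} (hs : s ≠ 0)
    (ha : jacobiP a α β (-1) ≠ 0) (hb : jacobiP b γ δ (-1) ≠ 0)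
    (h : ∀ τ ∈ Ioo (-1 : ℝ) 1, c * (((1 - τ) / 2) ^ μ * jacobiP a α β τ) +
      d * (((1 + τ) / 2) ^ s * jacobiP b γ δ τ) = 0) : c = 0 ∧ d = 0 :=
  eq_zero_of_mul_add_mul_rpow_mul_eventuallyEq_zero tendsto_one_add_div_two_nhdsGT_neg_one
    ((tendsto_rpow_mul_jacobiP_nhds_neg_one a μ α β).mono_left nhdsWithin_le_nhds)
    (((continuous_jacobiP b γ δ).tendsto (-1)).mono_left nhdsWithin_le_nhds)
    hs ha hb (eventually_of_mem (Ioo_mem_nhdsGT (by norm_num)) h)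

theorem stmt11_general (p : ℝ) (a b : ℕ) (q σ : ℝ)
    (hq : q = ((a : ℝ) + (b : ℝ)) / 2) (hσ : σ = ((a : ℝ) - (b : ℝ)) / 2)
    (hp : ∀ k : ℕ, k ≤ a + b → p ≠ q - k) :
    ∀ c d : ℝ, (∀ τ ∈ Ioo (-1 : ℝ) 1, c * Q1 p σ a τ + d * Q3 p σ b τ = 0) →
      c = 0 ∧ d = 0 := by
  intro c d h
  have exponent_ne : p + σ ≠ 0 := fun h0 => hp a (by omega) (by linarith)
  have Q1_factor_ne : jacobiP a (p - σ) (-p - σ) (-1) ≠ 0 :=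
    jacobiP_neg_one_ne_zero _ fun i hi hi' => hp i (by omega) (by linarith)
  have Q3_factor_ne : jacobiP b (σ - p) (p + σ) (-1) ≠ 0 := by
    refine jacobiP_neg_one_ne_zero _ fun i hi hi' => hp (a + b - i) (by omega) ?_
    rw [Nat.cast_sub (by omega), Nat.cast_add]
    linarith
  exact eq_zero_of_mul_rpow_mul_jacobiP_add_eq_zero exponent_ne Q1_factor_ne Q3_factor_ne h

/-- For `(a+b)/2 < p`, the solutions `Q₁` and `Q₃` are linearly independent
as functions on `(−1,1)`. -/
theorem stmt11 (p : ℝ) (a b : ℕ) (q σ : ℝ)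
    (hq : q = ((a : ℝ) + (b : ℝ)) / 2) (hσ : σ = ((a : ℝ) - (b : ℝ)) / 2)
    (hqp : q < p) :
    ∀ c d : ℝ, (∀ τ ∈ Set.Ioo (-1 : ℝ) 1, c * Q1 p σ a τ + d * Q3 p σ b τ = 0) →
      c = 0 ∧ d = 0 :=
  stmt11_general p a b q σ hq hσ fun k _ => by linarith [k.cast_nonneg (α := ℝ)]
end

section
/- Let p, q be natural numbers and σ an integer with |σ| ≤ q < p. Then every twice continuously differentiable function y : (−1,1) → ℝ satisfying (1−τ²)·y''(τ) + 2·((p−1)·τ − σ)·y'(τ) + (q(q+1) − p(p−1))·y(τ) = 0 for all τ ∈ (−1,1) coincides on (−1,1) with the restriction of a polynomial of degree at most p+q. In particular, every such solution extends real-analytically across τ = ±1. -/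
/-!
For a polynomial in `1 - τ` with coefficients `z_k` the equation is the two-term recurrence
`2 * (k + 1) * (k - (p - 1 - σ)) * z_{k+1} = (k - (p + q)) * (k - (p - q - 1)) * z_k`, so a solution
may start at the exponent `0` or `p - σ` and stop at `p - q - 1` or `p + q`. Running the recurrence
from `0` to `p - q - 1` and from `p - σ` to `p + q` gives two polynomial solutions of different
degrees, whose Wronskian is therefore not zero. By Abel's identity the Wronskian of any two
solutions is a constant multiple of `(1 - τ) ^ (p - σ - 1) * (1 + τ) ^ (p + σ - 1)`, so every
solution is a linear combination of these two polynomials.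
-/

open Polynomial

section Wronskian

/-- Twice differentiable solutions on `s` of the linear equation `a y'' + b y' + c y = 0`. The
derivatives are those of `y` on the whole field, so the notion is meant for open `s`. -/
structure SolvesLinearODEOn {𝕜 : Type*} [NontriviallyNormedField 𝕜]
    (a b c : 𝕜 → 𝕜) (s : Set 𝕜) (y : 𝕜 → 𝕜) : Prop where
  differentiableOn : DifferentiableOn 𝕜 y s
  differentiableOn_deriv : DifferentiableOn 𝕜 (deriv y) s
  eq_zero : ∀ t ∈ s, a t * deriv (deriv y) t + b t * deriv y t + c t * y t = 0

namespace SolvesLinearODEOn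

section NontriviallyNormedField

variable {𝕜 : Type*} [NontriviallyNormedField 𝕜] {a b c u v y : 𝕜 → 𝕜} {s : Set 𝕜}

theorem hasDerivAt (hy : SolvesLinearODEOn a b c s y) (hs : IsOpen s) {t : 𝕜} (ht : t ∈ s) :
    HasDerivAt y (deriv y t) t :=
  (hy.differentiableOn.differentiableAt (hs.mem_nhds ht)).hasDerivAt

theorem hasDerivAt_deriv (hy : SolvesLinearODEOn a b c s y) (hs : IsOpen s) {t : 𝕜} (ht : t ∈ s) :
    HasDerivAt (deriv y) (deriv (deriv y) t) t :=
  (hy.differentiableOn_deriv.differentiableAt (hs.mem_nhds ht)).hasDerivAt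

theorem hasDerivAt_wronskian (hu : SolvesLinearODEOn a b c s u) (hv : SolvesLinearODEOn a b c s v)
    (hs : IsOpen s) {t : 𝕜} (ht : t ∈ s) :
    HasDerivAt (fun t ↦ u t * deriv v t - deriv u t * v t)
      (u t * deriv (deriv v) t - deriv (deriv u) t * v t) t :=
  (((hu.hasDerivAt hs ht).mul (hv.hasDerivAt_deriv hs ht)).sub
    ((hu.hasDerivAt_deriv hs ht).mul (hv.hasDerivAt hs ht))).congr_deriv (by ring)

end NontriviallyNormedField

variable {𝕜 : Type*} [RCLike 𝕜] {a b c u v w y : 𝕜 → 𝕜} {s : Set 𝕜}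

-- Abel's identity: the Wronskian satisfies the same first order equation as `w`.
theorem exists_wronskian_eq_const_mul (hu : SolvesLinearODEOn a b c s u)
    (hv : SolvesLinearODEOn a b c s v) (hs : IsOpen s) (hs' : IsPreconnected s)
    (ha : ∀ t ∈ s, a t ≠ 0) (hw : DifferentiableOn 𝕜 w s) (hw₀ : ∀ t ∈ s, w t ≠ 0)
    (haw : ∀ t ∈ s, a t * deriv w t = -b t * w t) :
    ∃ C : 𝕜, ∀ t ∈ s, u t * deriv v t - deriv u t * v t = C * w t := by
  have quotient_deriv : ∀ t ∈ s,
      HasDerivAt (fun t ↦ (u t * deriv v t - deriv u t * v t) / w t) 0 t := by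
    intro t ht
    have w_deriv := (hw.differentiableAt (hs.mem_nhds ht)).hasDerivAt
    refine ((hu.hasDerivAt_wronskian hv hs ht).div w_deriv (hw₀ t ht)).congr_deriv ?_
    refine div_eq_zero_iff.2 (.inl (mul_left_cancel₀ (ha t ht) ?_))
    linear_combination u t * w t * hv.eq_zero t ht - v t * w t * hu.eq_zero t ht
      - (u t * deriv v t - deriv u t * v t) * haw t ht
  obtain ⟨C, hC⟩ := hs.exists_is_const_of_deriv_eq_zero hs'
    (fun t ht ↦ (quotient_deriv t ht).differentiableAt.differentiableWithinAt)
    (fun t ht ↦ (quotient_deriv t ht).deriv)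
  exact ⟨C, fun t ht ↦ (div_eq_iff (hw₀ t ht)).1 (hC t ht)⟩

theorem exists_eq_linear_combination (hy : SolvesLinearODEOn a b c s y)
    (hu : SolvesLinearODEOn a b c s u) (hv : SolvesLinearODEOn a b c s v)
    (huv : ∃ t ∈ s, u t * deriv v t - deriv u t * v t ≠ 0) (hs : IsOpen s)
    (hs' : IsPreconnected s) (ha : ∀ t ∈ s, a t ≠ 0) (hw : DifferentiableOn 𝕜 w s)
    (hw₀ : ∀ t ∈ s, w t ≠ 0) (haw : ∀ t ∈ s, a t * deriv w t = -b t * w t) :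
    ∃ A B : 𝕜, ∀ t ∈ s, y t = A * u t + B * v t := by
  obtain ⟨C, hC⟩ := hu.exists_wronskian_eq_const_mul hv hs hs' ha hw hw₀ haw
  obtain ⟨Cu, hCu⟩ := hy.exists_wronskian_eq_const_mul hu hs hs' ha hw hw₀ haw
  obtain ⟨Cv, hCv⟩ := hy.exists_wronskian_eq_const_mul hv hs hs' ha hw hw₀ haw
  have C_ne_zero : C ≠ 0 := by
    rintro rfl
    obtain ⟨t, ht, wronskian_ne_zero⟩ := huv
    exact wronskian_ne_zero (by rw [hC t ht, zero_mul])
  refine ⟨Cv / C, -Cu / C, fun t ht ↦ ?_⟩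
  have scaled : C * y t = Cv * u t - Cu * v t := by
    apply mul_left_cancel₀ (hw₀ t ht)
    linear_combination -y t * hC t ht - v t * hCu t ht + u t * hCv t ht
  field_simp
  linear_combination scaled

end SolvesLinearODEOn

end Wronskian

section Polynomial

theorem mul_derivative_pow {R : Type*} [CommSemiring R] (P : R[X]) (n : ℕ) :
    P * derivative (P ^ n) = n * P ^ n * derivative P := by
  cases n with
  | zero => simp
  | succ n => rw [derivative_pow, Nat.add_sub_cancel, pow_succ, C_eq_natCast]; ring

theorem degree_comp_one_sub_X {R : Type*} [CommRing R] [IsDomain R] (Z : R[X]) :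
    (Z.comp (1 - X)).degree = Z.degree := by
  have degree_one_sub_X : (1 - X : R[X]).degree = 1 := by
    rw [← neg_sub, degree_neg, ← C_1, degree_X_sub_C]
  rw [degree_comp (by rw [degree_one_sub_X]; exact zero_lt_one), degree_one_sub_X, mul_one]

theorem exists_eval_ne_zero_of_isOpen {𝕜 : Type*} [NontriviallyNormedField 𝕜] {P : 𝕜[X]}
    (hP : P ≠ 0) {s : Set 𝕜} (hs : IsOpen s) (hs₀ : s.Nonempty) : ∃ t ∈ s, P.eval t ≠ 0 := by
  by_contra! h
  obtain ⟨t, ht⟩ := hs₀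
  exact hP (P.eq_zero_of_infinite_isRoot ((infinite_of_mem_nhds t (hs.mem_nhds ht)).mono h))

theorem coeff_X_mul_derivative {R : Type*} [Semiring R] (P : R[X]) (k : ℕ) :
    (X * derivative P).coeff k = k * P.coeff k := by
  cases k with
  | zero => simp
  | succ k => rw [coeff_X_mul, coeff_derivative, ← Nat.cast_succ, Nat.cast_comm]

theorem natDegree_X_mul_derivative_le {R : Type*} [Semiring R] (P : R[X]) :
    (X * derivative P).natDegree ≤ P.natDegree :=
  natDegree_le_iff_coeff_eq_zero.2 fun k hk ↦ by
    rw [coeff_X_mul_derivative, coeff_eq_zero_of_natDegree_lt hk, mul_zero]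

theorem coeff_X_mul_wronskian {R : Type*} [CommRing R] (P Q : R[X]) :
    (X * wronskian P Q).coeff (P.natDegree + Q.natDegree) =
      (Q.natDegree - P.natDegree) * (P.leadingCoeff * Q.leadingCoeff) := by
  have split : X * wronskian P Q = P * (X * derivative Q) - X * derivative P * Q := by
    rw [wronskian]; ring
  rw [split, coeff_sub,
    coeff_mul_add_eq_of_natDegree_le le_rfl (natDegree_X_mul_derivative_le Q),
    coeff_mul_add_eq_of_natDegree_le (natDegree_X_mul_derivative_le P) le_rfl,
    coeff_X_mul_derivative, coeff_X_mul_derivative]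
  simp only [coeff_natDegree]
  ring

theorem wronskian_ne_zero_of_degree_eq {R : Type*} [CommRing R] [IsDomain R] [CharZero R]
    {P Q : R[X]} {m n : ℕ} (hP : P.degree = m) (hQ : Q.degree = n) (hmn : m ≠ n) :
    wronskian P Q ≠ 0 := by
  intro hW
  have hcoeff := coeff_X_mul_wronskian P Q
  rw [hW, mul_zero, coeff_zero, natDegree_eq_of_degree_eq_some hP,
    natDegree_eq_of_degree_eq_some hQ] at hcoeff
  refine mul_ne_zero (sub_ne_zero.2 (Nat.cast_injective.ne hmn.symm)) ?_ hcoeff.symm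
  exact mul_ne_zero (leadingCoeff_ne_zero.2 (ne_zero_of_coe_le_degree hP.ge))
    (leadingCoeff_ne_zero.2 (ne_zero_of_coe_le_degree hQ.ge))

end Polynomial

section Recurrence

variable {R F : Type*} [CommSemiring R] [Field F]

/-- The truncated hypergeometric series `∑ c_k X ^ k` over `m ≤ k ≤ n` with term ratio `r`, that is
with `c_m = 1` and `c_{k+1} = r k * c_k`. -/
noncomputable def truncatedSeries (r : ℕ → R) (m n : ℕ) : R[X] :=
  ∑ k ∈ Finset.Icc m n, monomial k (∏ i ∈ Finset.Ico m k, r i)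

theorem coeff_truncatedSeries (r : ℕ → R) (m n k : ℕ) :
    (truncatedSeries r m n).coeff k =
      if k ∈ Finset.Icc m n then ∏ i ∈ Finset.Ico m k, r i else 0 := by
  simp only [truncatedSeries, finsetSum_coeff, coeff_monomial, Finset.sum_ite_eq']

theorem degree_truncatedSeries [NoZeroDivisors R] [Nontrivial R] {r : ℕ → R} {m n : ℕ}
    (hmn : m ≤ n) (hr : ∀ k ∈ Finset.Ico m n, r k ≠ 0) : (truncatedSeries r m n).degree = n := by
  refine degree_eq_of_le_of_coeff_ne_zero ?_ ?_
  · refine degree_le_iff_coeff_zero _ _ |>.2 fun k hk ↦ ?_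
    rw [Nat.cast_lt] at hk
    rw [coeff_truncatedSeries, if_neg (by simp only [Finset.mem_Icc]; omega)]
  · rw [coeff_truncatedSeries, if_pos (Finset.right_mem_Icc.2 hmn)]
    exact Finset.prod_ne_zero_iff.2 hr

theorem mul_coeff_succ_truncatedSeries {f g : ℕ → F} {m n : ℕ} (hf : ∀ k ∈ Finset.Ico m n, f k ≠ 0)
    (hm : ∀ k, k + 1 = m → f k = 0) (hn : g n = 0) (k : ℕ) :
    f k * (truncatedSeries (fun i ↦ g i / f i) m n).coeff (k + 1) =
      g k * (truncatedSeries (fun i ↦ g i / f i) m n).coeff k := by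
  simp only [coeff_truncatedSeries, Finset.mem_Icc]
  by_cases hk : k ∈ Finset.Ico m n
  · have := hf k hk
    rw [Finset.mem_Ico] at hk
    rw [if_pos (by omega), if_pos (by omega), Finset.prod_Ico_succ_top hk.1]
    field_simp
  · rw [Finset.mem_Ico] at hk
    split_ifs with h_succ h_self h_self
    · omega
    · rw [hm k (by omega), zero_mul, mul_zero]
    · rw [show k = n by omega, hn, zero_mul, mul_zero]
    · rw [mul_zero, mul_zero]

end Recurrence

section Jacobi

/-- The solutions on `s` of the equation of the theorem, with `p`, `q`, `σ` in the field. It is the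
Jacobi equation of parameters `α = σ - p`, `β = -σ - p` and degree `p + q`. -/
abbrev SolvesJacobiOn {𝕜 : Type*} [RCLike 𝕜] (p q σ : 𝕜) : Set 𝕜 → (𝕜 → 𝕜) → Prop :=
  SolvesLinearODEOn (fun t ↦ 1 - t ^ 2) (fun t ↦ 2 * ((p - 1) * t - σ))
    (fun _ ↦ q * (q + 1) - p * (p - 1))

theorem euler_operator_eq_zero_of_recurrence {R : Type*} [CommRing R] {p q σ : R} {Z : R[X]}
    (hZ : ∀ k : ℕ, 2 * (k + 1) * (k - (p - 1 - σ)) * Z.coeff (k + 1) =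
      (k - (p + q)) * (k - (p - q - 1)) * Z.coeff k) :
    C 2 * (X * derivative (derivative Z)) - C (2 * (p - 1 - σ)) * derivative Z
      - X * derivative (X * derivative Z) + C (2 * p - 1) * (X * derivative Z)
      + C (q * (q + 1) - p * (p - 1)) * Z = 0 := by
  ext k
  simp only [coeff_add, coeff_sub, coeff_C_mul, coeff_X_mul_derivative, coeff_derivative,
    coeff_zero]
  linear_combination hZ k

theorem jacobi_comp_one_sub_X_eq_zero {R : Type*} [CommRing R] {p q σ : R} {Z : R[X]}
    (hZ : ∀ k : ℕ, 2 * (k + 1) * (k - (p - 1 - σ)) * Z.coeff (k + 1) =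
      (k - (p + q)) * (k - (p - q - 1)) * Z.coeff k) :
    (1 - X ^ 2) * derivative (derivative (Z.comp (1 - X))) +
      2 * (C (p - 1) * X - C σ) * derivative (Z.comp (1 - X)) +
      C (q * (q + 1) - p * (p - 1)) * Z.comp (1 - X) = 0 := by
  have substituted := congrArg (fun P ↦ P.comp (1 - X)) (euler_operator_eq_zero_of_recurrence hZ)
  simp only [derivative_comp_one_sub_X, derivative_mul, derivative_X, derivative_neg, add_comp,
    sub_comp, mul_comp, C_comp, X_comp, one_comp, zero_comp, ofNat_comp, map_add, map_sub, map_mul,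
    map_one, C_ofNat] at substituted ⊢
  linear_combination substituted

/-- The weight `(1 - X) ^ m * (1 + X) ^ n` of the Jacobi equation, to which the Wronskian of any two
solutions is proportional. -/
noncomputable def jacobiWeight (R : Type*) [CommRing R] (m n : ℕ) : R[X] :=
  (1 - X) ^ m * (1 + X) ^ n

theorem one_sub_X_sq_mul_derivative_jacobiWeight {R : Type*} [CommRing R] (m n : ℕ) :
    (1 - X ^ 2) * derivative (jacobiWeight R m n) =
      ((n : R[X]) * (1 - X) - (m : R[X]) * (1 + X)) * jacobiWeight R m n := by
  have left_factor := mul_derivative_pow (1 - X : R[X]) m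
  have right_factor := mul_derivative_pow (1 + X : R[X]) n
  simp only [derivative_sub, derivative_add, derivative_one, derivative_X]
    at left_factor right_factor
  rw [jacobiWeight, derivative_mul]
  linear_combination (1 + X) ^ n * (1 + X) * left_factor + (1 - X) ^ m * (1 - X) * right_factor

variable {𝕜 : Type*} [RCLike 𝕜] {p q σ : 𝕜} {d j k : ℕ}

theorem solvesJacobiOn_eval_comp_one_sub_X {Z : 𝕜[X]}
    (hZ : ∀ i : ℕ, 2 * (i + 1) * (i - (p - 1 - σ)) * Z.coeff (i + 1) =
      (i - (p + q)) * (i - (p - q - 1)) * Z.coeff i) (s : Set 𝕜) :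
    SolvesJacobiOn p q σ s fun t ↦ (Z.comp (1 - X)).eval t := by
  have deriv_eval : ∀ P : 𝕜[X], (deriv fun t ↦ P.eval t) = fun t ↦ (derivative P).eval t :=
    fun P ↦ funext fun t ↦ P.deriv
  refine ⟨(Z.comp (1 - X)).differentiable.differentiableOn, ?_, fun t _ ↦ ?_⟩
  · rw [deriv_eval]
    exact (derivative (Z.comp (1 - X))).differentiable.differentiableOn
  · simpa only [deriv_eval, eval_add, eval_sub, eval_mul, eval_pow, eval_X, eval_C, eval_one,
      eval_zero, eval_ofNat] using congrArg (eval t) (jacobi_comp_one_sub_X_eq_zero hZ)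

-- The possible `m`, namely `0` and `p - σ = d + j + 1`, are the exponents of the equation at
-- `τ = 1`; the possible `n`, namely `p - q - 1 = d` and `p + q = d + j + k + 1`, are the growth
-- rates at `∞`.
theorem exists_degree_eq_and_solvesJacobiOn (hd : p - q - 1 = d) (hj : q - σ = j) (hk : q + σ = k)
    {m n : ℕ} (hmn : m ≤ n) (hm : m = 0 ∨ m = d + j + 1) (hn : n = d ∨ n = d + j + k + 1)
    (hne : ∀ i ∈ Finset.Ico m n, i ≠ d + j ∧ i ≠ d) :
    ∃ P : 𝕜[X], P.degree = n ∧ ∀ s, SolvesJacobiOn p q σ s fun t ↦ P.eval t := by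
  have hp_sub : p - 1 - σ = (d + j : ℕ) := by push_cast; linear_combination hd + hj
  have hp_add : p + q = (d + j + k + 1 : ℕ) := by push_cast; linear_combination hd + hj + hk
  let f : ℕ → 𝕜 := fun i ↦ 2 * (i + 1) * (i - (p - 1 - σ))
  let g : ℕ → 𝕜 := fun i ↦ (i - (p + q)) * (i - (p - q - 1))
  have f_eq (i : ℕ) : f i = 2 * (i + 1) * (i - (d + j : ℕ)) := by simp only [f, hp_sub]
  have g_eq (i : ℕ) : g i = (i - (d + j + k + 1 : ℕ)) * (i - d) := by simp only [g, hp_add, hd]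
  have f_ne_zero : ∀ i ∈ Finset.Ico m n, f i ≠ 0 := fun i hi ↦ by
    rw [f_eq]
    exact mul_ne_zero (mul_ne_zero two_ne_zero i.cast_add_one_ne_zero)
      (sub_ne_zero.2 (Nat.cast_injective.ne (hne i hi).1))
  have g_ne_zero : ∀ i ∈ Finset.Ico m n, g i ≠ 0 := fun i hi ↦ by
    have i_lt := (Finset.mem_Ico.1 hi).2
    rw [g_eq]
    exact mul_ne_zero (sub_ne_zero.2 (Nat.cast_injective.ne (by omega)))
      (sub_ne_zero.2 (Nat.cast_injective.ne (hne i hi).2))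
  have f_eq_zero : ∀ i, i + 1 = m → f i = 0 := fun i hi ↦ by
    rw [f_eq, show i = d + j by omega, sub_self, mul_zero]
  have g_eq_zero : g n = 0 := by
    rw [g_eq]
    rcases hn with rfl | rfl <;> ring
  have ratio_ne_zero := fun i hi ↦ div_ne_zero (g_ne_zero i hi) (f_ne_zero i hi)
  refine ⟨(truncatedSeries (fun i ↦ g i / f i) m n).comp (1 - X), ?_,
    solvesJacobiOn_eval_comp_one_sub_X
      (mul_coeff_succ_truncatedSeries f_ne_zero f_eq_zero g_eq_zero)⟩
  rw [degree_comp_one_sub_X, degree_truncatedSeries hmn ratio_ne_zero]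

theorem SolvesLinearODEOn.exists_eq_linear_combination_of_jacobi {m n : ℕ} (hm : p - 1 - σ = m)
    (hn : p - 1 + σ = n) {s : Set 𝕜} (hs : IsOpen s) (hs' : IsPreconnected s) (h_one : 1 ∉ s)
    (h_neg_one : -1 ∉ s) {y u v : 𝕜 → 𝕜} (hy : SolvesJacobiOn p q σ s y)
    (hu : SolvesJacobiOn p q σ s u) (hv : SolvesJacobiOn p q σ s v)
    (huv : ∃ t ∈ s, u t * deriv v t - deriv u t * v t ≠ 0) :
    ∃ A B : 𝕜, ∀ t ∈ s, y t = A * u t + B * v t := by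
  have one_sub_ne_zero : ∀ t ∈ s, 1 - t ≠ 0 := fun t ht h ↦
    h_one (by rwa [sub_eq_zero.1 h])
  have one_add_ne_zero : ∀ t ∈ s, 1 + t ≠ 0 := fun t ht h ↦
    h_neg_one (by rwa [← eq_neg_of_add_eq_zero_right h])
  refine hy.exists_eq_linear_combination (w := fun t ↦ (jacobiWeight 𝕜 m n).eval t) hu hv huv hs
    hs' (fun t ht ↦ ?_) (jacobiWeight 𝕜 m n).differentiable.differentiableOn (fun t ht ↦ ?_)
    fun t _ ↦ ?_
  · rw [show 1 - t ^ 2 = (1 - t) * (1 + t) by ring]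
    exact mul_ne_zero (one_sub_ne_zero t ht) (one_add_ne_zero t ht)
  · simp only [jacobiWeight, eval_mul, eval_pow, eval_sub, eval_add, eval_one, eval_X]
    exact mul_ne_zero (pow_ne_zero _ (one_sub_ne_zero t ht)) (pow_ne_zero _ (one_add_ne_zero t ht))
  · have weight_ode := congrArg (eval t) (one_sub_X_sq_mul_derivative_jacobiWeight (R := 𝕜) m n)
    simp only [eval_mul, eval_pow, eval_sub, eval_add, eval_one, eval_X, eval_natCast] at weight_ode
    rw [Polynomial.deriv, weight_ode, ← hm, ← hn]
    ring

end Jacobi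

-- For integers `p`, `q`, `σ` the existence of `d`, `j`, `k` says `|σ| ≤ q < p`; the parameters may
-- also be half-integers.
theorem stmt12_general {𝕜 : Type*} [RCLike 𝕜] {p q σ : 𝕜} {d j k : ℕ} (hd : p - q - 1 = d)
    (hj : q - σ = j) (hk : q + σ = k) {s : Set 𝕜} (hs : IsOpen s) (hs' : IsPreconnected s)
    (h_one : 1 ∉ s) (h_neg_one : -1 ∉ s) {y : 𝕜 → 𝕜} (hy : DifferentiableOn 𝕜 y s)
    (hy' : DifferentiableOn 𝕜 (deriv y) s)
    (hode : ∀ τ ∈ s, (1 - τ ^ 2) * deriv (deriv y) τ + 2 * ((p - 1) * τ - σ) * deriv y τ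
      + (q * (q + 1) - p * (p - 1)) * y τ = 0) :
    ∃ P : 𝕜[X], P.degree ≤ (d + j + k + 1 : ℕ) ∧ ∀ τ ∈ s, y τ = P.eval τ := by
  rcases s.eq_empty_or_nonempty with rfl | hs₀
  · exact ⟨0, by simp, by simp⟩
  obtain ⟨U, hU_deg, hU⟩ := exists_degree_eq_and_solvesJacobiOn hd hj hk (Nat.zero_le d)
    (.inl rfl) (.inl rfl) (fun i hi ↦ by rw [Finset.mem_Ico] at hi; omega)
  obtain ⟨V, hV_deg, hV⟩ := exists_degree_eq_and_solvesJacobiOn (m := d + j + 1) hd hj hk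
    (by omega) (.inr rfl) (.inr rfl) (fun i hi ↦ by rw [Finset.mem_Ico] at hi; omega)
  have wronskian_ne_zero : wronskian U V ≠ 0 :=
    wronskian_ne_zero_of_degree_eq hU_deg hV_deg (by omega)
  obtain ⟨t, ht, hUV⟩ := exists_eval_ne_zero_of_isOpen wronskian_ne_zero hs hs₀
  rw [wronskian, eval_sub, eval_mul, eval_mul, ← Polynomial.deriv, ← Polynomial.deriv] at hUV
  have hm : p - 1 - σ = (d + j : ℕ) := by push_cast; linear_combination hd + hj
  have hn : p - 1 + σ = (d + k : ℕ) := by push_cast; linear_combination hd + hk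
  obtain ⟨A, B, hAB⟩ := SolvesLinearODEOn.exists_eq_linear_combination_of_jacobi hm hn
    hs hs' h_one h_neg_one ⟨hy, hy', hode⟩ (hU s) (hV s) ⟨t, ht, hUV⟩
  refine ⟨A • U + B • V, degree_add_le_of_degree_le ?_ ?_, fun τ hτ ↦ by simp [hAB τ hτ]⟩
  · refine (degree_smul_le A U).trans ?_
    rw [hU_deg]
    exact_mod_cast (by omega : d ≤ d + j + k + 1)
  · exact (degree_smul_le B V).trans hV_deg.le

/-- Lemma C.1: for `|σ| ≤ q < p`, every `C²` solution on `(−1,1)` of the Jacobi-type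
equation `(1−τ²)y'' + 2((p−1)τ − σ)y' + (q(q+1) − p(p−1))y = 0` coincides with the
restriction of a polynomial of degree at most `p+q`; in particular it extends
real-analytically across `τ = ±1`. -/
theorem stmt12 (p q : ℕ) (σ : ℤ) (hσ : |σ| ≤ (q : ℤ)) (hqp : q < p)
    (y : ℝ → ℝ) (hy : ContDiffOn ℝ 2 y (Set.Ioo (-1 : ℝ) 1))
    (hode : ∀ τ ∈ Set.Ioo (-1 : ℝ) 1,
      (1 - τ ^ 2) * deriv (deriv y) τ + 2 * (((p : ℝ) - 1) * τ - (σ : ℝ)) * deriv y τ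
        + ((q : ℝ) * ((q : ℝ) + 1) - (p : ℝ) * ((p : ℝ) - 1)) * y τ = 0) :
    ∃ P : Polynomial ℝ, P.degree ≤ (p + q : ℕ) ∧
      ∀ τ ∈ Set.Ioo (-1 : ℝ) 1, y τ = P.eval τ := by
  obtain ⟨d, rfl⟩ := Nat.exists_eq_add_of_lt hqp
  obtain ⟨j, hj⟩ := Int.eq_ofNat_of_zero_le (sub_nonneg.2 (le_of_abs_le hσ))
  obtain ⟨k, hk⟩ := Int.eq_ofNat_of_zero_le (neg_le_iff_add_nonneg'.1 (neg_le_of_abs_le hσ))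
  rw [show q + d + 1 + q = d + j + k + 1 by omega]
  exact stmt12_general (by push_cast; ring) (by exact_mod_cast hj) (by exact_mod_cast hk) isOpen_Ioo
    isPreconnected_Ioo (by simp) (by simp) (hy.differentiableOn two_ne_zero)
    ((hy.deriv_of_isOpen isOpen_Ioo one_add_one_eq_two.le).differentiableOn one_ne_zero) hode
end

section
/- For every natural number n, all real parameters α, β, and every τ ∈ ℝ, the Jacobi polynomial admits the alternative representation P_n^{(α,β)}(τ) = (1/n!)·Σ_{k=0}^{n} c_k·((τ−1)/2)^k, where c_k = (n!/(k!·(n−k)!))·( ∏_{j=k+1}^{n} (α+j) )·( ∏_{j=1}^{k} (n+j+α+β) ). -/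
/-!
Put `x = (τ - 1) / 2`, so that `(τ + 1) / 2 = 1 + x`. Expanding `(1 + x) ^ l` and using
`choose a (i + j) * (i + j).choose i = choose a i * choose (a - i) j`, the coefficient of `x ^ k`
becomes `choose (n + α) (n - k)` times a Chu–Vandermonde convolution, which sums to
`choose (n + k + α + β) k`. Each of the two factors is a product of consecutive shifts of its
parameter divided by a factorial.
-/

open Finset

theorem sum_antidiagonal_antidiagonal_fst_eq_snd {A M : Type*} [AddMonoid A] [HasAntidiagonal A]
    [AddCommMonoid M] (f : A → A → A → M) (n : A) :
    ∑ p ∈ antidiagonal n, ∑ q ∈ antidiagonal p.1, f q.1 q.2 p.2 =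
      ∑ p ∈ antidiagonal n, ∑ q ∈ antidiagonal p.2, f p.1 q.1 q.2 := by
  simp only [sum_sigma']
  apply sum_nbij' (fun ⟨⟨_, c⟩, ⟨a, b⟩⟩ ↦ ⟨(a, b + c), (b, c)⟩)
    (fun ⟨⟨a, _⟩, ⟨b, c⟩⟩ ↦ ⟨(a + b, c), (a, b)⟩)
  all_goals
    rintro ⟨⟨_, _⟩, ⟨_, _⟩⟩ h
    simp only [mem_sigma, HasAntidiagonal.mem_antidiagonal] at h
    obtain ⟨rfl, rfl⟩ := h
    simp [add_assoc]

section BinomialRing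

variable {R : Type*} [CommRing R] [BinomialRing R]

theorem choose_add_mul_natCast_choose (a : R) (i j : ℕ) :
    Ring.choose a (i + j) * ((i + j).choose i : R) =
      Ring.choose a i * Ring.choose (a - i) j := by
  simpa [mul_comm] using Ring.choose_smul_choose a (Nat.le_add_right i j)

theorem sum_choose_mul_choose_mul_pow_mul_add_pow (a b x y : R) (n : ℕ) :
    ∑ p ∈ antidiagonal n,
        Ring.choose a p.1 * Ring.choose b p.2 * x ^ p.2 * (y + x) ^ p.1 =
      ∑ p ∈ antidiagonal n,
        Ring.choose a p.1 * Ring.choose (a - p.1 + b) p.2 * y ^ p.1 * x ^ p.2 := by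
  let term (i j m : ℕ) : R :=
    Ring.choose a i * Ring.choose (a - i) j * Ring.choose b m * y ^ i * x ^ (j + m)
  have binomial_expansion (l m : ℕ) :
      Ring.choose a l * Ring.choose b m * x ^ m * (y + x) ^ l =
        ∑ q ∈ antidiagonal l, term q.1 q.2 m := by
    rw [(Commute.all y x).add_pow', mul_sum]
    refine sum_congr rfl fun q hq ↦ ?_
    simp only [term]
    rw [← choose_add_mul_natCast_choose, HasAntidiagonal.mem_antidiagonal.mp hq, nsmul_eq_mul,
      pow_add]
    ring
  have vandermonde (i k : ℕ) :
      ∑ q ∈ antidiagonal k, term i q.1 q.2 =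
        Ring.choose a i * Ring.choose (a - i + b) k * y ^ i * x ^ k := by
    rw [Ring.add_choose_eq k (Commute.all _ _), mul_sum, sum_mul, sum_mul]
    refine sum_congr rfl fun q hq ↦ ?_
    simp only [term]
    rw [HasAntidiagonal.mem_antidiagonal.mp hq]
    ring
  simp only [binomial_expansion, ← vandermonde]
  exact sum_antidiagonal_antidiagonal_fst_eq_snd term n

theorem sum_choose_mul_choose_mul_pow_mul_one_add_pow (α β x : R) (n : ℕ) :
    ∑ l ∈ range (n + 1),
        Ring.choose (n + α) l * Ring.choose (n + β) (n - l) * x ^ (n - l) * (1 + x) ^ l =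
      ∑ k ∈ range (n + 1),
        Ring.choose (α + n) (n - k) * Ring.choose (n + α + β + k) k * x ^ k := by
  rw [← Nat.sum_antidiagonal_eq_sum_range_succ fun l m ↦
      Ring.choose (n + α) l * Ring.choose (n + β) m * x ^ m * (1 + x) ^ l,
    sum_choose_mul_choose_mul_pow_mul_add_pow, ← Nat.sum_antidiagonal_swap,
    Nat.sum_antidiagonal_eq_sum_range_succ_mk]
  refine sum_congr rfl fun k hk ↦ ?_
  have parameter_eq : n + α - (n - k : ℕ) + (n + β) = n + α + β + k := by
    rw [Nat.cast_sub (mem_range_succ_iff.mp hk)]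
    ring
  simp only [Prod.fst_swap, Prod.snd_swap]
  rw [parameter_eq, one_pow, mul_one, add_comm (n : R) α]

end BinomialRing

theorem prod_range_add_natCast_sub_eq_prod_Icc {R : Type*} [CommRing R] (z : R) {k n : ℕ}
    (hk : k ≤ n) :
    ∏ i ∈ range (n - k), (z + n - i) = ∏ j ∈ Icc (k + 1) n, (z + j) := by
  refine prod_nbij' (n - ·) (n - ·) ?_ ?_ ?_ ?_ fun i hi ↦ ?_
  any_goals simp only [mem_range, mem_Icc]; lia
  rw [Nat.cast_sub ((mem_range.mp hi).le.trans (Nat.sub_le n k)), add_sub_assoc]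

section Field

variable {K : Type*} [Field K] [CharZero K]

theorem choose_eq_prod_range_div_factorial (z : K) (r : ℕ) :
    Ring.choose z r = (∏ i ∈ range r, (z - i)) / r.factorial := by
  rw [Ring.choose_eq_smul, ← descPochhammer_eval_eq_prod_range, ← Polynomial.aeval_eq_smeval,
    Polynomial.aeval_def, ← Polynomial.eval_map, descPochhammer_map, smul_eq_mul, div_eq_inv_mul]

theorem choose_add_natCast_eq_prod_Icc_div_factorial (z : K) {k n : ℕ} (hk : k ≤ n) :
    Ring.choose (z + n) (n - k) = (∏ j ∈ Icc (k + 1) n, (z + j)) / (n - k).factorial := by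
  rw [choose_eq_prod_range_div_factorial, prod_range_add_natCast_sub_eq_prod_Icc z hk]

theorem stmt19_general (n : ℕ) (α β τ : K) :
    ∑ l ∈ range (n + 1), Ring.choose (n + α) l * Ring.choose (n + β) (n - l) *
        ((τ - 1) / 2) ^ (n - l) * ((τ + 1) / 2) ^ l =
      (1 / n.factorial) * ∑ k ∈ range (n + 1),
        (n.factorial / (k.factorial * (n - k).factorial))
          * (∏ j ∈ Icc (k + 1) n, (α + j)) * (∏ j ∈ Icc 1 k, (n + j + α + β))
          * ((τ - 1) / 2) ^ k := by
  have add_one_div_two : (τ + 1) / 2 = 1 + (τ - 1) / 2 := by ring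
  rw [add_one_div_two, sum_choose_mul_choose_mul_pow_mul_one_add_pow, mul_sum]
  refine sum_congr rfl fun k hk ↦ ?_
  have choose_right : Ring.choose (n + α + β + k) k =
      (∏ j ∈ Icc 1 k, (n + j + α + β)) / k.factorial := by
    simpa [add_right_comm] using
      choose_add_natCast_eq_prod_Icc_div_factorial (n + α + β) k.zero_le
  rw [choose_add_natCast_eq_prod_Icc_div_factorial α (mem_range_succ_iff.mp hk), choose_right]
  have factorial_ne_zero : (n.factorial : K) ≠ 0 := Nat.cast_ne_zero.mpr n.factorial_ne_zero
  field_simp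

end Field

theorem gbinom_eq_choose (z : ℝ) (r : ℕ) : gbinom z r = Ring.choose z r :=
  (choose_eq_prod_range_div_factorial z r).symm

/-- The alternative representation of the Jacobi polynomial (Appendix C.1.1):
`P_n^{(α,β)}(τ) = (1/n!)·Σ_{k=0}^n c_k·((τ−1)/2)^k` with
`c_k = (n!/(k!(n−k)!))·∏_{j=k+1}^n (α+j)·∏_{j=1}^k (n+j+α+β)`. -/
theorem stmt19 (n : ℕ) (α β : ℝ) (τ : ℝ) :
    jacobiP n α β τ = (1 / (Nat.factorial n : ℝ)) *
      ∑ k ∈ Finset.range (n + 1),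
        ((Nat.factorial n : ℝ) / ((Nat.factorial k : ℝ) * (Nat.factorial (n - k) : ℝ)))
          * (∏ j ∈ Finset.Icc (k + 1) n, (α + (j : ℝ)))
          * (∏ j ∈ Finset.Icc 1 k, ((n : ℝ) + (j : ℝ) + α + β))
          * ((τ - 1) / 2) ^ k := by
  simpa only [jacobiP, gbinom_eq_choose] using stmt19_general n α β τ
end
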